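/- arXiv:1007.0564 — 2 statements merged into one kernel-verified Lean document; each statement's English description precedes it below -/
import Mathlib

section
/- For every tempered distribution T ∈ S′(ℝ^d) and every φ in the Schwartz space S(ℝ^d), the family (T(h_β) · ∫_{ℝ^d} φ(x) h_β(x) dx)_{β∈ℕ^d} is absolutely summable and its sum equals T(φ); that is, T(φ) = Σ_{β∈ℕ^d} T(h_β) ∫_{ℝ^d} φ(x) h_β(x) dx. -/
open MeasureTheory

noncomputable def hermitePoly (n : ℕ) (x : ℝ) : ℝ :=
  (-1 : ℝ) ^ n * Real.exp (x ^ 2 / 2) *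
    iteratedDeriv n (fun y : ℝ => Real.exp (-(y ^ 2 / 2))) x

noncomputable def hermiteFun (n : ℕ) (x : ℝ) : ℝ :=
  (Real.sqrt (Real.sqrt (2 * Real.pi) * n.factorial))⁻¹ *
    Real.exp (-(x ^ 2 / 4)) * hermitePoly n x

noncomputable def hermiteFunMulti (d : ℕ) (α : Fin d → ℕ) (x : EuclideanSpace ℝ (Fin d)) : ℝ :=
  ∏ i, hermiteFun (α i) (x i)

noncomputable def hermCoeff (d : ℕ) (f : EuclideanSpace ℝ (Fin d) → ℝ) (β : Fin d → ℕ) : ℝ :=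
  ∫ x, f x * hermiteFunMulti d β x

/-!
The operators `½x_i ± ∂_i` are adjoint to each other in `L²` and shift the index `β_i` of the
Hermite function `h_β` up to a square-root factor. Position and derivative are combinations of the
two, so every Schwartz seminorm of `h_β` grows at most polynomially in `β`. Conversely, composing
them gives a symmetric operator on `𝓢` with eigenvalue `∏ (β_i + 1)` at `h_β`; moving its powers
onto `φ` shows that the coefficients of `φ` decay faster than any power of `β`. Hence the Hermite
series of `φ` converges in `𝓢`. The difference between its sum and `φ` is orthogonal to every
polynomial times the Gaussian `h_0`; expanding the exponential in the Fourier transform of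
`h_0` times this difference shows that the transform vanishes, so the sum is `φ`. Now apply `T`.
-/

open scoped SchwartzMap LineDeriv RealInnerProductSpace FourierTransform
open Filter Asymptotics

theorem summable_pi_prod {ι : Type*} [Fintype ι] {κ : ι → Type*} {f : ∀ i, κ i → ℝ}
    (hf₀ : ∀ i a, 0 ≤ f i a) (hf : ∀ i, Summable (f i)) :
    Summable fun x : ∀ i, κ i => ∏ i, f i (x i) := by
  classical
  refine summable_of_sum_le (c := ∏ i, ∑' a, f i a)
    (fun x => Finset.prod_nonneg fun i _ => hf₀ i _) fun u => ?_
  let s (i : ι) : Finset (κ i) := u.image fun x => x i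
  have hu : u ⊆ Fintype.piFinset s := fun x hx =>
    Fintype.mem_piFinset.2 fun i => Finset.mem_image_of_mem _ hx
  calc ∑ x ∈ u, ∏ i, f i (x i)
      ≤ ∑ x ∈ Fintype.piFinset s, ∏ i, f i (x i) :=
        Finset.sum_le_sum_of_subset_of_nonneg hu fun x _ _ =>
          Finset.prod_nonneg fun i _ => hf₀ i _
    _ = ∏ i, ∑ a ∈ s i, f i a := (Finset.prod_univ_sum s f).symm
    _ ≤ ∏ i, ∑' a, f i a :=
        Finset.prod_le_prod (fun i _ => Finset.sum_nonneg fun a _ => hf₀ i a)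
          fun i _ => (hf i).sum_le_tsum _ fun a _ => hf₀ i a

theorem two_mul_sq_le_integral_sq_add_deriv_sq {f f' : ℝ → ℝ}
    (hderiv : ∀ x, HasDerivAt f (f' x) x) (hf : Integrable fun x => f x ^ 2)
    (hf' : Integrable fun x => f' x ^ 2) (x : ℝ) :
    2 * f x ^ 2 ≤ ∫ y, (f y ^ 2 + f' y ^ 2) := by
  have hderiv_sq (y : ℝ) : HasDerivAt (fun y => f y ^ 2) (2 * f y * f' y) y := by
    simpa using (hderiv y).fun_pow 2
  have habs (y : ℝ) : |2 * f y * f' y| ≤ f y ^ 2 + f' y ^ 2 := by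
    rw [abs_mul, abs_mul, abs_two, ← sq_abs (f y), ← sq_abs (f' y)]
    exact two_mul_le_add_sq _ _
  have hint : Integrable fun y => 2 * f y * f' y := by
    refine (hf.add hf').mono' ?_ (.of_forall habs)
    rw [← funext fun y => (hderiv_sq y).deriv]
    exact (measurable_deriv _).aestronglyMeasurable
  have hleft : ∫ y in Set.Iic x, 2 * f y * f' y = f x ^ 2 := by
    rw [integral_Iic_of_hasDerivAt_of_tendsto' (fun y _ => hderiv_sq y) hint.integrableOn
      (tendsto_zero_of_hasDerivAt_of_integrableOn_Iic (a := x) (fun y _ => hderiv_sq y)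
        hint.integrableOn hf.integrableOn), sub_zero]
  have hright : ∫ y in Set.Ioi x, 2 * f y * f' y = -f x ^ 2 := by
    rw [integral_Ioi_of_hasDerivAt_of_tendsto' (fun y _ => hderiv_sq y) hint.integrableOn
      (tendsto_zero_of_hasDerivAt_of_integrableOn_Ioi (a := x) (fun y _ => hderiv_sq y)
        hint.integrableOn hf.integrableOn), zero_sub]
  calc 2 * f x ^ 2
      = (∫ y in Set.Iic x, 2 * f y * f' y) - ∫ y in Set.Ioi x, 2 * f y * f' y := by
        rw [hleft, hright]; ring
    _ ≤ (∫ y in Set.Iic x, |2 * f y * f' y|) + ∫ y in Set.Ioi x, |2 * f y * f' y| := by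
        rw [sub_eq_add_neg]
        exact add_le_add ((le_abs_self _).trans (abs_integral_le_integral_abs))
          ((neg_le_abs _).trans (abs_integral_le_integral_abs))
    _ = ∫ y, |2 * f y * f' y| :=
        intervalIntegral.integral_Iic_add_Ioi hint.abs.integrableOn hint.abs.integrableOn
    _ ≤ ∫ y, (f y ^ 2 + f' y ^ 2) := integral_mono hint.abs (hf.add hf') habs

section Moments

variable {V E : Type*} [NormedAddCommGroup V] [InnerProductSpace ℝ V] [FiniteDimensional ℝ V]
  [MeasurableSpace V] [BorelSpace V] [NormedAddCommGroup E] [NormedSpace ℂ E]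

theorem integral_cexp_inner_smul_eq_zero {f : V → E} {w : V} (hf : AEStronglyMeasurable f)
    (hexp : Integrable fun x => Real.exp |⟪w, x⟫| * ‖f x‖)
    (hmoment : ∀ n : ℕ, ∫ x, ⟪w, x⟫ ^ n • f x = 0) :
    ∫ x, Complex.exp (⟪w, x⟫ * Complex.I) • f x = 0 := by
  let F (n : ℕ) (x : V) : E := ((⟪w, x⟫ * Complex.I) ^ n / n.factorial) • f x
  have hF_integral (n : ℕ) : ∫ x, F n x = 0 := by
    have hF (x : V) : F n x = (Complex.I ^ n / n.factorial : ℂ) • (⟪w, x⟫ ^ n • f x) := by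
      simp only [F]
      rw [← Complex.coe_smul, smul_smul]
      congr 1
      push_cast
      ring
    simp_rw [hF]
    rw [integral_smul, hmoment, smul_zero]
  have hF_hasSum :
      HasSum (fun n => ∫ x, F n x) (∫ x, Complex.exp (⟪w, x⟫ * Complex.I) • f x) := by
    refine hasSum_integral_of_dominated_convergence
      (fun n x => |⟪w, x⟫| ^ n / n.factorial * ‖f x‖) (fun n => ?_)
      (fun n => .of_forall fun x => ?_) (.of_forall fun x => ?_) ?_ (.of_forall fun x => ?_)
    · exact (Continuous.aestronglyMeasurable (by fun_prop)).smul hf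
    · simp [F, norm_smul]
    · exact (Real.summable_pow_div_factorial _).mul_right _
    · simpa only [tsum_mul_right, Real.exp_eq_exp_ℝ, NormedSpace.exp_eq_tsum_div] using hexp
    · rw [Complex.exp_eq_exp_ℂ]
      exact (NormedSpace.expSeries_div_hasSum_exp _).smul_const _
  simp_rw [hF_integral] at hF_hasSum
  exact hF_hasSum.unique hasSum_zero

theorem eq_zero_of_integral_inner_pow_smul_eq_zero [CompleteSpace E] {f : V → E}
    (hf : Continuous f) (hexp : ∀ w, Integrable fun x => Real.exp |⟪w, x⟫| * ‖f x‖)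
    (hmoment : ∀ (w : V) (n : ℕ), ∫ x, ⟪w, x⟫ ^ n • f x = 0) : f = 0 := by
  have hf_int : Integrable f := by
    have hnorm : Integrable fun x => ‖f x‖ := by simpa using hexp 0
    exact (integrable_norm_iff hf.aestronglyMeasurable).1 hnorm
  have hfourier : 𝓕 f = 0 := by
    ext w
    rw [Real.fourier_eq', Pi.zero_apply]
    simpa [inner_smul_left, real_inner_comm] using
      integral_cexp_inner_smul_eq_zero hf.aestronglyMeasurable (hexp ((-2 * Real.pi) • w))
        (hmoment _)
  rw [← hf.fourierInv_fourier_eq hf_int (by simp [hfourier]), hfourier]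
  ext x
  simp [Real.fourierInv_eq]

end Moments

section SchwartzSeries

variable {ι E F : Type*} [NormedAddCommGroup E] [NormedSpace ℝ E]
  [NormedAddCommGroup F] [NormedSpace ℝ F] {u : ι → 𝓢(E, F)}

theorem contDiff_tsum_schwartz [CompleteSpace F]
    (hu : ∀ l, Summable fun i => SchwartzMap.seminorm ℝ 0 l (u i)) :
    ContDiff ℝ (⊤ : ℕ∞) fun x => ∑' i, u i x :=
  contDiff_tsum (fun i => (u i).smooth ⊤) (fun l _ => hu l)
    fun l i x _ => SchwartzMap.norm_iteratedFDeriv_le_seminorm ℝ (u i) l x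

theorem norm_pow_mul_iteratedFDeriv_tsum_le [CompleteSpace F]
    (hu : ∀ k l, Summable fun i => SchwartzMap.seminorm ℝ k l (u i)) (k l : ℕ) (x : E) :
    ‖x‖ ^ k * ‖iteratedFDeriv ℝ l (fun y => ∑' i, u i y) x‖ ≤
      ∑' i, SchwartzMap.seminorm ℝ k l (u i) := by
  have hsum : Summable fun i => ‖iteratedFDeriv ℝ l (u i) x‖ :=
    .of_nonneg_of_le (fun i => norm_nonneg _)
      (fun i => SchwartzMap.norm_iteratedFDeriv_le_seminorm ℝ (u i) l x) (hu 0 l)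
  rw [iteratedFDeriv_tsum_apply (N := ⊤) (fun i => (u i).smooth ⊤) (fun n _ => hu 0 n)
    (fun n i y _ => SchwartzMap.norm_iteratedFDeriv_le_seminorm ℝ (u i) n y) le_top x]
  calc ‖x‖ ^ k * ‖∑' i, iteratedFDeriv ℝ l (u i) x‖
      ≤ ‖x‖ ^ k * ∑' i, ‖iteratedFDeriv ℝ l (u i) x‖ := by
        gcongr; exact norm_tsum_le_tsum_norm hsum
    _ = ∑' i, ‖x‖ ^ k * ‖iteratedFDeriv ℝ l (u i) x‖ := tsum_mul_left.symm
    _ ≤ ∑' i, SchwartzMap.seminorm ℝ k l (u i) :=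
        (hsum.mul_left _).tsum_le_tsum (fun i => SchwartzMap.le_seminorm ℝ k l (u i) x) (hu k l)

theorem summable_of_summable_schwartz_seminorm [CompleteSpace F]
    (hu : ∀ k l, Summable fun i => SchwartzMap.seminorm ℝ k l (u i)) : Summable u := by
  let ψ : 𝓢(E, F) :=
    { toFun x := ∑' i, u i x
      smooth' := contDiff_tsum_schwartz (hu 0)
      decay' k l := ⟨_, norm_pow_mul_iteratedFDeriv_tsum_le hu k l⟩ }
  refine ⟨ψ, ?_⟩
  rw [HasSum, SummationFilter.unconditional_filter,
    (schwartz_withSeminorms ℝ E F).tendsto_nhds]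
  rintro ⟨k, l⟩ ε hε
  have htail := tendsto_tsum_compl_atTop_zero fun i => SchwartzMap.seminorm ℝ k l (u i)
  filter_upwards [htail.eventually_lt_const hε] with s hs
  refine lt_of_le_of_lt ?_ hs
  have hrem (x : E) : (ψ - ∑ i ∈ s, u i) x = ∑' i : {i // i ∉ s}, u i x := by
    have hx : Summable fun i => u i x :=
      .of_norm_bounded (hu 0 0) fun i => SchwartzMap.norm_le_seminorm ℝ (u i) x
    rw [sub_apply, sum_apply, sub_eq_iff_eq_add']
    exact (hx.sum_add_tsum_subtype_compl s).symm
  rw [SchwartzMap.schwartzSeminormFamily_apply, map_sub_rev]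
  refine SchwartzMap.seminorm_le_bound ℝ k l _ (tsum_nonneg fun i => apply_nonneg _ _) fun x => ?_
  rw [funext hrem]
  exact norm_pow_mul_iteratedFDeriv_tsum_le (fun k l => (hu k l).subtype _) k l x

end SchwartzSeries

section HermitePoly

open Polynomial

theorem derivative_hermite_succ (n : ℕ) :
    derivative (hermite (n + 1)) = (n + 1 : ℤ[X]) * hermite n := by
  induction n with
  | zero => simp [hermite_succ, hermite_zero]
  | succ n ih =>
    have hderiv : derivative (hermite n) = X * hermite n - hermite (n + 1) := by
      rw [hermite_succ]; ring
    rw [hermite_succ (n + 1), derivative_sub, derivative_mul, derivative_X, ih]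
    simp only [derivative_mul, derivative_add, derivative_natCast, derivative_one, hderiv]
    push_cast
    ring

theorem hermitePoly_eq_aeval (n : ℕ) : hermitePoly n = fun x => aeval x (hermite n) := by
  ext x
  rw [hermitePoly, iteratedDeriv_eq_iterate, hermite_eq_deriv_gaussian']
  ring

theorem hasDerivAt_hermitePoly_raise (n : ℕ) (x : ℝ) :
    HasDerivAt (hermitePoly n) (x * hermitePoly n x - hermitePoly (n + 1) x) x := by
  simpa [hermitePoly_eq_aeval, hermite_succ] using (hermite n).hasDerivAt_aeval x

theorem hasDerivAt_hermitePoly_lower (n : ℕ) (x : ℝ) :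
    HasDerivAt (hermitePoly n) (n * hermitePoly (n - 1) x) x := by
  cases n with
  | zero => simpa [hermitePoly_eq_aeval] using hasDerivAt_const x (1 : ℝ)
  | succ n =>
    rw [hermitePoly_eq_aeval]
    refine ((hermite (n + 1)).hasDerivAt_aeval x).congr_deriv ?_
    rw [derivative_hermite_succ]
    simp [hermitePoly_eq_aeval]

theorem integrable_eval_mul_exp_neg_mul_sq (P : ℝ[X]) {b : ℝ} (hb : 0 < b) :
    Integrable fun x : ℝ => P.eval x * Real.exp (-b * x ^ 2) := by
  induction P using Polynomial.induction_on' with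
  | add p q hp hq => simpa [add_mul] using! hp.add hq
  | monomial n a =>
    have hn : (-1 : ℝ) < n := by linarith [n.cast_nonneg (α := ℝ)]
    simpa [mul_assoc] using (integrable_rpow_mul_exp_neg_mul_sq hb hn).const_mul a

end HermitePoly

section HermiteFun

/-- The normalising constant of `hermiteFun n`. -/
noncomputable def hermiteNorm (n : ℕ) : ℝ := (√(√(2 * Real.pi) * n.factorial))⁻¹

theorem hermiteNorm_pos (n : ℕ) : 0 < hermiteNorm n := by
  unfold hermiteNorm; positivity

theorem hermiteNorm_eq_sqrt_mul_succ (n : ℕ) :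
    hermiteNorm n = √(n + 1) * hermiteNorm (n + 1) := by
  have hfactorial : √(2 * Real.pi) * (n + 1).factorial =
      (n + 1) * (√(2 * Real.pi) * n.factorial) := by
    rw [Nat.factorial_succ]; push_cast; ring
  have hne : √((n : ℝ) + 1) ≠ 0 := by positivity
  rw [hermiteNorm, hermiteNorm, hfactorial, Real.sqrt_mul (by positivity : (0 : ℝ) ≤ n + 1),
    mul_inv, mul_inv_cancel_left₀ hne]

theorem hermiteFun_eq (n : ℕ) (x : ℝ) :
    hermiteFun n x = hermiteNorm n * Real.exp (-(x ^ 2 / 4)) * hermitePoly n x := rfl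

theorem hermiteFun_zero (x : ℝ) : hermiteFun 0 x = hermiteNorm 0 * Real.exp (-(x ^ 2 / 4)) := by
  simp [hermiteFun_eq, hermitePoly_eq_aeval]

theorem hasDerivAt_hermiteFun_of_hasDerivAt_hermitePoly {n : ℕ} {x p' : ℝ}
    (hp : HasDerivAt (hermitePoly n) p' x) :
    HasDerivAt (hermiteFun n)
      (hermiteNorm n * Real.exp (-(x ^ 2 / 4)) * p' - x / 2 * hermiteFun n x) x := by
  have hgauss : HasDerivAt (fun y : ℝ => Real.exp (-(y ^ 2 / 4)))
      (Real.exp (-(x ^ 2 / 4)) * -(x / 2)) x := by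
    refine ((((hasDerivAt_id x).pow 2).div_const 4).neg.congr_deriv ?_).exp
    simp only [Nat.cast_ofNat, id_eq, Nat.add_one_sub_one, pow_one, mul_one, neg_inj]
    ring
  refine ((hgauss.const_mul (hermiteNorm n)).mul hp).congr_deriv ?_
  rw [hermiteFun_eq]
  ring

theorem hasDerivAt_hermiteFun_raise (n : ℕ) (x : ℝ) :
    HasDerivAt (hermiteFun n) (x / 2 * hermiteFun n x - √(n + 1) * hermiteFun (n + 1) x) x := by
  refine (hasDerivAt_hermiteFun_of_hasDerivAt_hermitePoly
    (hasDerivAt_hermitePoly_raise n x)).congr_deriv ?_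
  simp only [hermiteFun_eq, hermiteNorm_eq_sqrt_mul_succ n]
  ring

-- At `n = 0` the truncated index `n - 1` is harmless: its coefficient `√0` vanishes.
theorem hasDerivAt_hermiteFun_lower (n : ℕ) (x : ℝ) :
    HasDerivAt (hermiteFun n) (√n * hermiteFun (n - 1) x - x / 2 * hermiteFun n x) x := by
  refine (hasDerivAt_hermiteFun_of_hasDerivAt_hermitePoly
    (hasDerivAt_hermitePoly_lower n x)).congr_deriv ?_
  cases n with
  | zero => simp
  | succ n =>
    simp only [hermiteFun_eq, hermiteNorm_eq_sqrt_mul_succ n, Nat.add_sub_cancel]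
    push_cast
    linear_combination -hermiteNorm (n + 1) * Real.exp (-(x ^ 2 / 4)) * hermitePoly n x *
      Real.mul_self_sqrt (by positivity : (0 : ℝ) ≤ n + 1)

theorem hasDerivAt_hermiteFun (n : ℕ) (x : ℝ) :
    HasDerivAt (hermiteFun n)
      ((√n * hermiteFun (n - 1) x - √(n + 1) * hermiteFun (n + 1) x) / 2) x := by
  have hunique := (hasDerivAt_hermiteFun_raise n x).unique (hasDerivAt_hermiteFun_lower n x)
  refine (hasDerivAt_hermiteFun_raise n x).congr_deriv ?_
  linear_combination (1 / 2) * hunique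

theorem integrable_hermiteFun_mul (m n : ℕ) :
    Integrable fun x => hermiteFun m x * hermiteFun n x := by
  let p (k : ℕ) : Polynomial ℝ := (Polynomial.hermite k).map (algebraMap ℤ ℝ)
  have hexp (x : ℝ) :
      Real.exp (-(1 / 2) * x ^ 2) = Real.exp (-(x ^ 2 / 4)) * Real.exp (-(x ^ 2 / 4)) := by
    rw [← Real.exp_add]; ring_nf
  refine ((integrable_eval_mul_exp_neg_mul_sq (p m * p n) one_half_pos).const_mul
    (hermiteNorm m * hermiteNorm n)).congr (.of_forall fun x => ?_)
  simp only [p, hexp, hermiteFun_eq, hermitePoly_eq_aeval, Polynomial.eval_mul,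
    Polynomial.eval_map_algebraMap]
  ring

theorem sqrt_mul_integral_hermiteFun_succ_mul (m n : ℕ) :
    √(m + 1) * ∫ x, hermiteFun (m + 1) x * hermiteFun n x =
      √n * ∫ x, hermiteFun m x * hermiteFun (n - 1) x := by
  have hderiv (x : ℝ) : HasDerivAt (fun x => hermiteFun m x * hermiteFun n x)
      (√n * (hermiteFun m x * hermiteFun (n - 1) x) -
        √(m + 1) * (hermiteFun (m + 1) x * hermiteFun n x)) x := by
    refine ((hasDerivAt_hermiteFun_raise m x).mul
      (hasDerivAt_hermiteFun_lower n x)).congr_deriv ?_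
    ring
  have hlower := (integrable_hermiteFun_mul m (n - 1)).const_mul √n
  have hraise := (integrable_hermiteFun_mul (m + 1) n).const_mul √(m + 1)
  have hzero := integral_eq_zero_of_hasDerivAt_of_integrable hderiv (hlower.sub hraise)
    (integrable_hermiteFun_mul m n)
  rw [integral_sub hlower hraise, integral_const_mul, integral_const_mul] at hzero
  exact (sub_eq_zero.1 hzero).symm

theorem integral_hermiteFun_zero_mul_self : ∫ x, hermiteFun 0 x * hermiteFun 0 x = 1 := by
  have hsq (x : ℝ) :
      hermiteFun 0 x * hermiteFun 0 x = hermiteNorm 0 ^ 2 * Real.exp (-(1 / 2) * x ^ 2) := by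
    rw [hermiteFun_zero, mul_mul_mul_comm, ← sq, ← Real.exp_add]
    ring_nf
  simp_rw [hsq]
  rw [integral_const_mul, integral_gaussian, hermiteNorm, inv_pow, Real.sq_sqrt (by positivity),
    div_div_eq_mul_div, div_one, mul_comm Real.pi, Nat.factorial_zero, Nat.cast_one, mul_one]
  exact inv_mul_cancel₀ (by positivity)

theorem integral_hermiteFun_mul (m n : ℕ) :
    ∫ x, hermiteFun m x * hermiteFun n x = if m = n then 1 else 0 := by
  have hne (k : ℕ) : √((k : ℝ) + 1) ≠ 0 := by positivity
  have hsucc_zero (k : ℕ) : ∫ x, hermiteFun (k + 1) x * hermiteFun 0 x = 0 := by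
    simpa [hne] using sqrt_mul_integral_hermiteFun_succ_mul k 0
  induction m generalizing n with
  | zero =>
    cases n with
    | zero => simpa using integral_hermiteFun_zero_mul_self
    | succ n => simpa [mul_comm] using hsucc_zero n
  | succ m ih =>
    cases n with
    | zero => simpa using hsucc_zero m
    | succ n =>
      have hstep := sqrt_mul_integral_hermiteFun_succ_mul m (n + 1)
      rw [Nat.add_sub_cancel, ih] at hstep
      rcases eq_or_ne m n with rfl | hmn
      · simpa [hne] using hstep
      · simpa [hne, hmn] using hstep

theorem deriv_hermiteFun_sq (n : ℕ) (x : ℝ) :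
    deriv (hermiteFun n) x ^ 2 =
      n / 4 * (hermiteFun (n - 1) x * hermiteFun (n - 1) x) +
        (n + 1) / 4 * (hermiteFun (n + 1) x * hermiteFun (n + 1) x) -
        √n * √(n + 1) / 2 * (hermiteFun (n - 1) x * hermiteFun (n + 1) x) := by
  rw [(hasDerivAt_hermiteFun n x).deriv]
  linear_combination
    hermiteFun (n - 1) x ^ 2 / 4 * Real.sq_sqrt (by positivity : (0 : ℝ) ≤ n) +
    hermiteFun (n + 1) x ^ 2 / 4 * Real.sq_sqrt (by positivity : (0 : ℝ) ≤ n + 1)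

theorem integrable_deriv_hermiteFun_sq (n : ℕ) :
    Integrable fun x => deriv (hermiteFun n) x ^ 2 := by
  have hint (j k : ℕ) (a : ℝ) := (integrable_hermiteFun_mul j k).const_mul a
  simpa only [deriv_hermiteFun_sq] using! ((hint _ _ _).add (hint _ _ _)).sub (hint _ _ _)

theorem integral_deriv_hermiteFun_sq (n : ℕ) :
    ∫ x, deriv (hermiteFun n) x ^ 2 = (2 * (n : ℝ) + 1) / 4 := by
  have hint (j k : ℕ) (a : ℝ) : Integrable fun x => a * (hermiteFun j x * hermiteFun k x) :=
    (integrable_hermiteFun_mul j k).const_mul a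
  simp_rw [deriv_hermiteFun_sq]
  rw [integral_sub ((hint _ _ _).fun_add (hint _ _ _)) (hint _ _ _),
    integral_add (hint _ _ _) (hint _ _ _)]
  simp only [integral_const_mul, integral_hermiteFun_mul, if_true,
    if_neg (by omega : n - 1 ≠ n + 1)]
  ring

theorem abs_hermiteFun_le (n : ℕ) (x : ℝ) : |hermiteFun n x| ≤ n + 1 := by
  have hint : Integrable fun x => hermiteFun n x ^ 2 := by
    simpa only [sq] using integrable_hermiteFun_mul n n
  have hnorm : ∫ x, hermiteFun n x ^ 2 = 1 := by simp [sq, integral_hermiteFun_mul]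
  have hbound := two_mul_sq_le_integral_sq_add_deriv_sq
    (fun y => (hasDerivAt_hermiteFun n y).differentiableAt.hasDerivAt) hint
    (integrable_deriv_hermiteFun_sq n) x
  rw [integral_add hint (integrable_deriv_hermiteFun_sq n), hnorm,
    integral_deriv_hermiteFun_sq] at hbound
  refine abs_le_of_sq_le_sq ?_ (by positivity)
  nlinarith [n.cast_nonneg (α := ℝ)]

end HermiteFun

section SchwartzSeminorm

variable {ι V F : Type*} [Fintype ι] [NormedAddCommGroup V] [InnerProductSpace ℝ V]
  [NormedAddCommGroup F] [NormedSpace ℝ F]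

theorem fderiv_schwartz_eq_sum_smulRight (b : OrthonormalBasis ι ℝ V) (φ : 𝓢(V, F)) :
    fderiv ℝ φ = fun x =>
      ∑ i, ContinuousLinearMap.smulRightL ℝ V F (innerSL ℝ (b i)) (∂_{b i} φ x) := by
  ext x v
  conv_lhs => rw [← b.sum_repr' v]
  simp [SchwartzMap.lineDerivOp_apply_eq_fderiv]

theorem schwartz_seminorm_succ_deriv_le (b : OrthonormalBasis ι ℝ V) (k l : ℕ) (φ : 𝓢(V, F)) :
    SchwartzMap.seminorm ℝ k (l + 1) φ ≤ ∑ i, SchwartzMap.seminorm ℝ k l (∂_{b i} φ) := by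
  refine SchwartzMap.seminorm_le_bound ℝ k (l + 1) φ
    (Finset.sum_nonneg fun i _ => apply_nonneg _ _) fun x => ?_
  let D (i : ι) : 𝓢(V, F) := ∂_{b i} φ
  let L (i : ι) : F →L[ℝ] V →L[ℝ] F := ContinuousLinearMap.smulRightL ℝ V F (innerSL ℝ (b i))
  have hL (i : ι) : ‖L i‖ ≤ 1 := by
    refine ContinuousLinearMap.opNorm_le_bound _ zero_le_one fun y => ?_
    simp [L, ContinuousLinearMap.norm_smulRight_apply, b.norm_eq_one]
  have hD (i : ι) : ContDiff ℝ l (D i) := (D i).smooth l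
  have hfderiv : fderiv ℝ φ = fun y => ∑ i, L i (D i y) := fderiv_schwartz_eq_sum_smulRight b φ
  have hLD (i : ι) : ContDiff ℝ l fun y => L i (D i y) := (L i).contDiff.comp (hD i)
  rw [← norm_iteratedFDeriv_fderiv, hfderiv,
    iteratedFDeriv_fun_sum_apply fun i _ => (hLD i).contDiffAt]
  calc ‖x‖ ^ k * ‖∑ i, iteratedFDeriv ℝ l (fun y => L i (D i y)) x‖
      ≤ ‖x‖ ^ k * ∑ i, ‖iteratedFDeriv ℝ l (D i) x‖ := by
        gcongr
        refine norm_sum_le_of_le _ fun i _ => ?_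
        exact ((L i).norm_iteratedFDeriv_comp_left (hD i).contDiffAt le_rfl).trans
          (mul_le_of_le_one_left (norm_nonneg _) (hL i))
    _ = ∑ i, ‖x‖ ^ k * ‖iteratedFDeriv ℝ l (D i) x‖ := Finset.mul_sum _ _ _
    _ ≤ ∑ i, SchwartzMap.seminorm ℝ k l (D i) :=
        Finset.sum_le_sum fun i _ => SchwartzMap.le_seminorm ℝ k l (D i) x

/-- Multiplication by the linear function `⟪v, ·⟫`, the position operator in direction `v`. -/
noncomputable def mulInner (v : V) : 𝓢(V, F) →L[ℝ] 𝓢(V, F) :=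
  SchwartzMap.smulLeftCLM F fun x => ⟪v, x⟫

theorem mulInner_apply (v : V) (φ : 𝓢(V, F)) (x : V) : mulInner v φ x = ⟪v, x⟫ • φ x :=
  SchwartzMap.smulLeftCLM_apply_apply (innerSL ℝ v).hasTemperateGrowth φ x

theorem schwartz_seminorm_succ_zero_le (b : OrthonormalBasis ι ℝ V) (k : ℕ) (φ : 𝓢(V, F)) :
    SchwartzMap.seminorm ℝ (k + 1) 0 φ ≤ ∑ i, SchwartzMap.seminorm ℝ k 0 (mulInner (b i) φ) := by
  refine SchwartzMap.seminorm_le_bound ℝ (k + 1) 0 φ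
    (Finset.sum_nonneg fun i _ => apply_nonneg _ _) fun x => ?_
  have hx : ‖x‖ ≤ ∑ i, ‖⟪b i, x⟫‖ := by
    conv_lhs => rw [← b.sum_repr' x]
    exact norm_sum_le_of_le _ fun i _ => by rw [norm_smul, b.norm_eq_one, mul_one]
  rw [norm_iteratedFDeriv_zero]
  calc ‖x‖ ^ (k + 1) * ‖φ x‖
      ≤ ‖x‖ ^ k * (∑ i, ‖⟪b i, x⟫‖) * ‖φ x‖ := by rw [pow_succ]; gcongr
    _ = ∑ i, ‖x‖ ^ k * ‖mulInner (b i) φ x‖ := by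
        simp only [mulInner_apply, norm_smul, Finset.mul_sum, Finset.sum_mul, mul_assoc]
    _ ≤ ∑ i, SchwartzMap.seminorm ℝ k 0 (mulInner (b i) φ) :=
        Finset.sum_le_sum fun i _ => SchwartzMap.norm_pow_mul_le_seminorm ℝ _ k x

end SchwartzSeminorm

section LadderOperators

variable {V F : Type*} [NormedAddCommGroup V] [InnerProductSpace ℝ V] [NormedAddCommGroup F]
  [NormedSpace ℝ F]

/-- The annihilation operator `½⟪v, ·⟫ + ∂_v` of the harmonic oscillator. -/
noncomputable def lowering (v : V) : 𝓢(V, F) →L[ℝ] 𝓢(V, F) :=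
  (1 / 2 : ℝ) • mulInner v + LineDeriv.lineDerivOpCLM ℝ 𝓢(V, F) v

/-- The creation operator `½⟪v, ·⟫ - ∂_v` of the harmonic oscillator. -/
noncomputable def raising (v : V) : 𝓢(V, F) →L[ℝ] 𝓢(V, F) :=
  (1 / 2 : ℝ) • mulInner v - LineDeriv.lineDerivOpCLM ℝ 𝓢(V, F) v

theorem lowering_apply (v : V) (φ : 𝓢(V, F)) (x : V) :
    lowering v φ x = (1 / 2 : ℝ) • ⟪v, x⟫ • φ x + ∂_{v} φ x := by
  simp [lowering, mulInner_apply]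

theorem raising_apply (v : V) (φ : 𝓢(V, F)) (x : V) :
    raising v φ x = (1 / 2 : ℝ) • ⟪v, x⟫ • φ x - ∂_{v} φ x := by
  simp [raising, mulInner_apply]

theorem mulInner_eq_lowering_add_raising (v : V) (φ : 𝓢(V, F)) :
    mulInner v φ = lowering v φ + raising v φ := by
  simp only [lowering, one_div, add_apply, smul_apply, LineDeriv.lineDerivOpCLM_apply, raising,
    sub_apply, add_add_sub_cancel]
  module

theorem lineDeriv_eq_lowering_sub_raising (v : V) (φ : 𝓢(V, F)) :
    ∂_{v} φ = (1 / 2 : ℝ) • (lowering v φ - raising v φ) := by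
  simp only [one_div, lowering, add_apply, smul_apply, LineDeriv.lineDerivOpCLM_apply, raising,
    sub_apply, add_sub_sub_cancel, smul_add]
  module

end LadderOperators

section L2Pairing

variable {V : Type*} [NormedAddCommGroup V] [InnerProductSpace ℝ V] [FiniteDimensional ℝ V]
  [MeasurableSpace V] [BorelSpace V]

/-- The `L²` inner product with a fixed Schwartz function, as a tempered distribution. -/
noncomputable def l2Pairing (ψ : 𝓢(V, ℝ)) : 𝓢(V, ℝ) →L[ℝ] ℝ :=
  innerSL ℝ (ψ.toLp 2) ∘L SchwartzMap.toLpCLM ℝ ℝ 2 volume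

theorem l2Pairing_eq_inner (ψ φ : 𝓢(V, ℝ)) :
    l2Pairing ψ φ = inner ℝ (ψ.toLp 2) (φ.toLp 2) := rfl

theorem l2Pairing_apply (ψ φ : 𝓢(V, ℝ)) : l2Pairing ψ φ = ∫ x, ψ x * φ x := by
  rw [l2Pairing_eq_inner, L2.inner_def]
  refine integral_congr_ae ?_
  filter_upwards [ψ.coeFn_toLp 2, φ.coeFn_toLp 2] with x hψ hφ
  rw [hψ, hφ, real_inner_comm]
  rfl

theorem l2Pairing_comm (ψ φ : 𝓢(V, ℝ)) : l2Pairing ψ φ = l2Pairing φ ψ :=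
  real_inner_comm (φ.toLp 2) (ψ.toLp 2)

theorem abs_l2Pairing_le (ψ φ : 𝓢(V, ℝ)) :
    |l2Pairing ψ φ| ≤ √(l2Pairing ψ ψ) * √(l2Pairing φ φ) := by
  simp only [l2Pairing_eq_inner, ← norm_eq_sqrt_real_inner]
  exact abs_real_inner_le_norm _ _

theorem l2Pairing_mulInner (v : V) (ψ φ : 𝓢(V, ℝ)) :
    l2Pairing ψ (mulInner v φ) = l2Pairing (mulInner v ψ) φ := by
  simp only [l2Pairing_apply, mulInner_apply, smul_eq_mul]
  exact integral_congr_ae (.of_forall fun x => by ring)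

theorem l2Pairing_lineDeriv (v : V) (ψ φ : 𝓢(V, ℝ)) :
    l2Pairing ψ (∂_{v} φ) = -l2Pairing (∂_{v} ψ) φ := by
  simp only [l2Pairing_apply]
  exact SchwartzMap.integral_mul_lineDerivOp_right_eq_neg_left ψ φ v

theorem l2Pairing_lowering (v : V) (ψ φ : 𝓢(V, ℝ)) :
    l2Pairing ψ (lowering v φ) = l2Pairing (raising v ψ) φ := by
  rw [l2Pairing_comm (raising v ψ)]
  simp only [lowering, raising, add_apply, sub_apply, smul_apply, map_add, map_sub, map_smul,
    LineDeriv.lineDerivOpCLM_apply]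
  rw [l2Pairing_mulInner, l2Pairing_lineDeriv, l2Pairing_comm φ, l2Pairing_comm φ, sub_eq_add_neg]

theorem l2Pairing_raising (v : V) (ψ φ : 𝓢(V, ℝ)) :
    l2Pairing ψ (raising v φ) = l2Pairing (lowering v ψ) φ := by
  rw [l2Pairing_comm, ← l2Pairing_lowering, l2Pairing_comm]

end L2Pairing

section PolyBounded

variable {ι : Type*} [Fintype ι]

/-- The weight `∏ i, (β i + 1)`, in powers of which the growth and decay of families indexed by
multi-indices are measured. -/
noncomputable def indexWeight (β : ι → ℕ) : ℝ := ∏ i, ((β i : ℝ) + 1)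

theorem one_le_indexWeight (β : ι → ℕ) : 1 ≤ indexWeight β :=
  Finset.one_le_prod fun i => by simp

theorem indexWeight_pos (β : ι → ℕ) : 0 < indexWeight β :=
  one_pos.trans_le (one_le_indexWeight β)

theorem succ_le_indexWeight (β : ι → ℕ) (i : ι) : (β i : ℝ) + 1 ≤ indexWeight β := by
  classical
  rw [indexWeight, ← Finset.mul_prod_erase _ _ (Finset.mem_univ i)]
  exact le_mul_of_one_le_right (by positivity) (Finset.one_le_prod fun j => by simp)

theorem indexWeight_mono : Monotone (indexWeight : (ι → ℕ) → ℝ) := fun β γ hβγ =>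
  Finset.prod_le_prod (fun i _ => by positivity) fun i _ => by gcongr; exact hβγ i

theorem indexWeight_add_le (β γ : ι → ℕ) :
    indexWeight (β + γ) ≤ indexWeight β * indexWeight γ := by
  rw [indexWeight, indexWeight, indexWeight, ← Finset.prod_mul_distrib]
  refine Finset.prod_le_prod (fun i _ => by positivity) fun i _ => ?_
  rw [Pi.add_apply]
  push_cast
  nlinarith [mul_nonneg (β i).cast_nonneg (γ i).cast_nonneg (α := ℝ)]

theorem summable_inv_indexWeight_sq : Summable fun β : ι → ℕ => (indexWeight β ^ 2)⁻¹ := by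
  have hone_dim : Summable fun n : ℕ => (((n : ℝ) + 1) ^ 2)⁻¹ := by
    simpa using (summable_nat_add_iff 1).2 (Real.summable_nat_pow_inv.2 one_lt_two)
  simpa only [indexWeight, Finset.prod_pow, Finset.prod_inv_distrib] using
    summable_pi_prod (fun (_ : ι) n => by positivity) fun _ => hone_dim

/-- Families of reals that grow at most like a power of `indexWeight`. -/
def IsPolyBounded (a : (ι → ℕ) → ℝ) : Prop :=
  ∃ m : ℕ, a =O[⊤] fun β => indexWeight β ^ m

namespace IsPolyBounded

variable {a b : (ι → ℕ) → ℝ}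

theorem mono (hb : IsPolyBounded b) (hab : ∀ β, |a β| ≤ |b β|) : IsPolyBounded a :=
  hb.imp fun _ hm => (isBigO_of_le _ hab).trans hm

theorem add (ha : IsPolyBounded a) (hb : IsPolyBounded b) :
    IsPolyBounded fun β => a β + b β := by
  obtain ⟨m, hm⟩ := ha
  obtain ⟨n, hn⟩ := hb
  have hpow {p q : ℕ} (hpq : p ≤ q) :
      (fun β : ι → ℕ => indexWeight β ^ p) =O[⊤] fun β => indexWeight β ^ q :=
    isBigO_of_le _ fun β => by
      have hpos := indexWeight_pos β
      rw [Real.norm_of_nonneg (by positivity), Real.norm_of_nonneg (by positivity)]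
      exact pow_le_pow_right₀ (one_le_indexWeight β) hpq
  exact ⟨max m n, (hm.trans (hpow (le_max_left m n))).add (hn.trans (hpow (le_max_right m n)))⟩

theorem mul (ha : IsPolyBounded a) (hb : IsPolyBounded b) :
    IsPolyBounded fun β => a β * b β := by
  obtain ⟨m, hm⟩ := ha
  obtain ⟨n, hn⟩ := hb
  exact ⟨m + n, by simpa only [pow_add] using hm.mul hn⟩

theorem sum {κ : Type*} (s : Finset κ) {a : κ → (ι → ℕ) → ℝ} (ha : ∀ i, IsPolyBounded (a i)) :
    IsPolyBounded fun β => ∑ i ∈ s, a i β := by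
  classical
  induction s using Finset.induction_on with
  | empty => exact ⟨0, isBigO_zero _ _⟩
  | insert i s hi ih => simpa only [Finset.sum_insert hi] using (ha i).add ih

theorem comp (ha : IsPolyBounded a) {s : (ι → ℕ) → ι → ℕ} {C : ℝ}
    (hs : ∀ β, indexWeight (s β) ≤ C * indexWeight β) : IsPolyBounded fun β => a (s β) := by
  obtain ⟨m, hm⟩ := ha
  refine ⟨m, (hm.comp_tendsto (tendsto_top (f := s))).trans (.of_bound (C ^ m) ?_)⟩
  refine .of_forall fun β => ?_
  have hpos := indexWeight_pos (s β)
  have hpos' := indexWeight_pos β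
  rw [Function.comp_apply, Real.norm_of_nonneg (by positivity), Real.norm_of_nonneg (by positivity),
    ← mul_pow]
  gcongr
  exact hs β

theorem comp_add (ha : IsPolyBounded a) (γ : ι → ℕ) : IsPolyBounded fun β => a (β + γ) :=
  ha.comp fun β => (indexWeight_add_le β γ).trans_eq (mul_comm _ _)

theorem comp_sub (ha : IsPolyBounded a) (γ : ι → ℕ) : IsPolyBounded fun β => a (β - γ) :=
  ha.comp (C := 1) fun β => by simpa using indexWeight_mono (tsub_le_self (a := β))

end IsPolyBounded

theorem isPolyBounded_indexWeight : IsPolyBounded (indexWeight : (ι → ℕ) → ℝ) :=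
  ⟨1, by simpa only [pow_one] using isBigO_refl _ _⟩

theorem isPolyBounded_sqrt_succ (i : ι) : IsPolyBounded fun β : ι → ℕ => √((β i : ℝ) + 1) :=
  isPolyBounded_indexWeight.mono fun β => by
    rw [abs_of_nonneg (by positivity), abs_of_pos (indexWeight_pos β)]
    refine le_trans ?_ (succ_le_indexWeight β i)
    rw [Real.sqrt_le_left (by positivity)]
    nlinarith [(β i).cast_nonneg (α := ℝ)]

theorem isPolyBounded_sqrt (i : ι) : IsPolyBounded fun β : ι → ℕ => √(β i : ℝ) :=
  (isPolyBounded_sqrt_succ i).mono fun β => by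
    rw [abs_of_nonneg (by positivity), abs_of_nonneg (by positivity)]
    gcongr
    simp

end PolyBounded

section HermiteFunMulti

variable {d : ℕ}

theorem hermiteFunMulti_eq_mul_prod_erase {β γ : Fin d → ℕ} {x y : EuclideanSpace ℝ (Fin d)}
    {i : Fin d} (hβ : ∀ j ≠ i, γ j = β j) (hx : ∀ j ≠ i, y j = x j) :
    hermiteFunMulti d γ y =
      hermiteFun (γ i) (y i) * ∏ j ∈ Finset.univ.erase i, hermiteFun (β j) (x j) := by
  rw [hermiteFunMulti, ← Finset.mul_prod_erase _ _ (Finset.mem_univ i)]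
  congr 1
  refine Finset.prod_congr rfl fun j hj => ?_
  rw [hβ j (Finset.ne_of_mem_erase hj), hx j (Finset.ne_of_mem_erase hj)]

theorem hasLineDerivAt_hermiteFunMulti {β : Fin d → ℕ} {i : Fin d}
    {x : EuclideanSpace ℝ (Fin d)} {c : ℝ} (hc : HasDerivAt (hermiteFun (β i)) c (x i)) :
    HasLineDerivAt ℝ (hermiteFunMulti d β)
      (c * ∏ j ∈ Finset.univ.erase i, hermiteFun (β j) (x j)) x (EuclideanSpace.single i 1) := by
  have hline (t : ℝ) : hermiteFunMulti d β (x + t • EuclideanSpace.single i 1) =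
      hermiteFun (β i) (x i + t) * ∏ j ∈ Finset.univ.erase i, hermiteFun (β j) (x j) := by
    rw [hermiteFunMulti_eq_mul_prod_erase (β := β) (x := x) (i := i) (fun _ _ => rfl)
      fun j hj => by simp [hj]]
    simp
  rw [HasLineDerivAt, funext hline]
  exact (HasDerivAt.comp_const_add (x i) 0 (by simpa using hc)).mul_const _

theorem abs_hermiteFunMulti_le (β : Fin d → ℕ) (x : EuclideanSpace ℝ (Fin d)) :
    |hermiteFunMulti d β x| ≤ indexWeight β := by
  rw [hermiteFunMulti, Finset.abs_prod]
  exact Finset.prod_le_prod (fun i _ => abs_nonneg _) fun i _ => abs_hermiteFun_le _ _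

theorem hermiteFunMulti_zero (x : EuclideanSpace ℝ (Fin d)) :
    hermiteFunMulti d 0 x = hermiteNorm 0 ^ d * Real.exp (-(‖x‖ ^ 2 / 4)) := by
  simp [hermiteFunMulti, hermiteFun_zero, Finset.prod_mul_distrib, ← Real.exp_sum,
    EuclideanSpace.real_norm_sq_eq, Finset.sum_div]

theorem integral_hermiteFunMulti_mul (α β : Fin d → ℕ) :
    ∫ x, hermiteFunMulti d α x * hermiteFunMulti d β x = if α = β then 1 else 0 := by
  rw [← (PiLp.volume_preserving_toLp (Fin d)).integral_comp
    (MeasurableEquiv.toLp 2 _).measurableEmbedding]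
  simp only [hermiteFunMulti, ← Finset.prod_mul_distrib]
  rw [integral_fintype_prod_volume_eq_prod
    (fun i (t : ℝ) => hermiteFun (α i) t * hermiteFun (β i) t)]
  simp only [integral_hermiteFun_mul, Finset.prod_ite_zero, Finset.prod_const_one,
    Finset.mem_univ, true_imp_iff, funext_iff]

end HermiteFunMulti

/-- The Schwartz functions `h β` are the Hermite functions on `ℝ^d`; this attaches to
`hermiteFunMulti` its structure of a Schwartz function. -/
def IsHermiteFamily {d : ℕ} (h : (Fin d → ℕ) → 𝓢(EuclideanSpace ℝ (Fin d), ℝ)) : Prop :=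
  ∀ β x, h β x = hermiteFunMulti d β x

namespace IsHermiteFamily

variable {d : ℕ} {h : (Fin d → ℕ) → 𝓢(EuclideanSpace ℝ (Fin d), ℝ)}

theorem lineDeriv_apply (hh : IsHermiteFamily h) {β : Fin d → ℕ} {i : Fin d}
    {x : EuclideanSpace ℝ (Fin d)} {c : ℝ} (hc : HasDerivAt (hermiteFun (β i)) c (x i)) :
    ∂_{EuclideanSpace.single i (1 : ℝ)} (h β) x =
      c * ∏ j ∈ Finset.univ.erase i, hermiteFun (β j) (x j) := by
  rw [SchwartzMap.lineDerivOp_apply, funext (hh β)]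
  exact (hasLineDerivAt_hermiteFunMulti hc).lineDeriv

theorem raising_eq (hh : IsHermiteFamily h) (β : Fin d → ℕ) (i : Fin d) :
    raising (EuclideanSpace.single i 1) (h β) = √(β i + 1) • h (β + Pi.single i 1) := by
  ext x
  rw [raising_apply, hh.lineDeriv_apply (hasDerivAt_hermiteFun_raise _ _), smul_apply, hh, hh,
    hermiteFunMulti_eq_mul_prod_erase (β := β) (x := x) (i := i) (by simp) (by simp),
    hermiteFunMulti_eq_mul_prod_erase (β := β) (γ := β + _) (x := x) (i := i)
      (fun j hj => by simp [hj]) (by simp)]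
  simp only [one_div, EuclideanSpace.inner_single_left, Real.ringHom_apply, one_mul, smul_eq_mul,
    Pi.add_apply, Pi.single_eq_same]
  ring

theorem lowering_eq (hh : IsHermiteFamily h) (β : Fin d → ℕ) (i : Fin d) :
    lowering (EuclideanSpace.single i 1) (h β) = √(β i) • h (β - Pi.single i 1) := by
  ext x
  rw [lowering_apply, hh.lineDeriv_apply (hasDerivAt_hermiteFun_lower _ _), smul_apply, hh, hh,
    hermiteFunMulti_eq_mul_prod_erase (β := β) (x := x) (i := i) (by simp) (by simp),
    hermiteFunMulti_eq_mul_prod_erase (β := β) (γ := β - _) (x := x) (i := i)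
      (fun j hj => by simp [hj]) (by simp)]
  simp only [one_div, EuclideanSpace.inner_single_left, Real.ringHom_apply, one_mul, smul_eq_mul,
    Pi.sub_apply, Pi.single_eq_same]
  ring

theorem lowering_raising_eq (hh : IsHermiteFamily h) (β : Fin d → ℕ) (i : Fin d) :
    lowering (EuclideanSpace.single i 1) (raising (EuclideanSpace.single i 1) (h β)) =
      ((β i : ℝ) + 1) • h β := by
  rw [hh.raising_eq, map_smul, hh.lowering_eq, add_tsub_cancel_right, smul_smul]
  congr 1
  simpa using Real.mul_self_sqrt (by positivity : (0 : ℝ) ≤ β i + 1)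

theorem l2Pairing_eq (hh : IsHermiteFamily h) (α β : Fin d → ℕ) :
    l2Pairing (h α) (h β) = if α = β then 1 else 0 := by
  simp only [l2Pairing_apply, hh α _, hh β _, integral_hermiteFunMulti_mul]

section SeminormGrowth

variable {q : Seminorm ℝ 𝓢(EuclideanSpace ℝ (Fin d), ℝ)}

theorem isPolyBounded_raising (hh : IsHermiteFamily h) (hq : IsPolyBounded fun β => q (h β))
    (i : Fin d) : IsPolyBounded fun β => q (raising (EuclideanSpace.single i 1) (h β)) := by
  simpa [hh.raising_eq, map_smul_eq_mul, abs_of_nonneg] using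
    (isPolyBounded_sqrt_succ i).mul (hq.comp_add (Pi.single i 1))

theorem isPolyBounded_lowering (hh : IsHermiteFamily h) (hq : IsPolyBounded fun β => q (h β))
    (i : Fin d) : IsPolyBounded fun β => q (lowering (EuclideanSpace.single i 1) (h β)) := by
  simpa [hh.lowering_eq, map_smul_eq_mul, abs_of_nonneg] using
    (isPolyBounded_sqrt i).mul (hq.comp_sub (Pi.single i 1))

theorem isPolyBounded_mulInner (hh : IsHermiteFamily h) (hq : IsPolyBounded fun β => q (h β))
    (i : Fin d) : IsPolyBounded fun β => q (mulInner (EuclideanSpace.single i 1) (h β)) := by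
  refine ((hh.isPolyBounded_lowering hq i).add (hh.isPolyBounded_raising hq i)).mono fun β => ?_
  rw [mulInner_eq_lowering_add_raising]
  refine abs_le_abs_of_nonneg (apply_nonneg _ _) (map_add_le_add _ _ _)

theorem isPolyBounded_lineDeriv (hh : IsHermiteFamily h) (hq : IsPolyBounded fun β => q (h β))
    (i : Fin d) : IsPolyBounded fun β => q (∂_{EuclideanSpace.single i (1 : ℝ)} (h β)) := by
  refine ((hh.isPolyBounded_lowering hq i).add (hh.isPolyBounded_raising hq i)).mono fun β => ?_
  refine abs_le_abs_of_nonneg (apply_nonneg _ _) ?_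
  rw [lineDeriv_eq_lowering_sub_raising, map_smul_eq_mul]
  refine (mul_le_of_le_one_left (apply_nonneg _ _) (by norm_num)).trans (map_sub_le_add _ _ _)

theorem isPolyBounded_seminorm (hh : IsHermiteFamily h) (k l : ℕ) :
    IsPolyBounded fun β => SchwartzMap.seminorm ℝ k l (h β) := by
  induction l with
  | succ l ih =>
    refine (IsPolyBounded.sum Finset.univ fun i => hh.isPolyBounded_lineDeriv ih i).mono
      fun β => abs_le_abs_of_nonneg (apply_nonneg _ _) ?_
    simpa using schwartz_seminorm_succ_deriv_le (EuclideanSpace.basisFun (Fin d) ℝ) k l (h β)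
  | zero =>
    induction k with
    | succ k ih =>
      refine (IsPolyBounded.sum Finset.univ fun i => hh.isPolyBounded_mulInner ih i).mono
        fun β => abs_le_abs_of_nonneg (apply_nonneg _ _) ?_
      simpa using schwartz_seminorm_succ_zero_le (EuclideanSpace.basisFun (Fin d) ℝ) k (h β)
    | zero =>
      refine isPolyBounded_indexWeight.mono fun β => abs_le_abs_of_nonneg (apply_nonneg _ _) ?_
      refine SchwartzMap.seminorm_le_bound ℝ 0 0 _ (indexWeight_pos β).le fun x => ?_
      simpa [hh β x] using abs_hermiteFunMulti_le β x

end SeminormGrowth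

section CoefficientDecay

theorem exists_l2Pairing_eq_prod_mul (hh : IsHermiteFamily h)
    (φ : 𝓢(EuclideanSpace ℝ (Fin d), ℝ)) (s : Finset (Fin d)) :
    ∃ ψ, ∀ β, l2Pairing (h β) ψ = (∏ i ∈ s, ((β i : ℝ) + 1)) * l2Pairing (h β) φ := by
  induction s using Finset.induction_on with
  | empty => exact ⟨φ, by simp⟩
  | insert i s hi ih =>
    obtain ⟨ψ, hψ⟩ := ih
    refine ⟨lowering (EuclideanSpace.single i 1) (raising (EuclideanSpace.single i 1) ψ),
      fun β => ?_⟩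
    rw [l2Pairing_lowering, l2Pairing_raising, hh.lowering_raising_eq, l2Pairing_comm, map_smul,
      l2Pairing_comm, hψ, Finset.prod_insert hi, smul_eq_mul, mul_assoc]

theorem exists_l2Pairing_eq_indexWeight_pow_mul (hh : IsHermiteFamily h)
    (φ : 𝓢(EuclideanSpace ℝ (Fin d), ℝ)) (m : ℕ) :
    ∃ ψ, ∀ β, l2Pairing (h β) ψ = indexWeight β ^ m * l2Pairing (h β) φ := by
  induction m with
  | zero => exact ⟨φ, by simp⟩
  | succ m ih =>
    obtain ⟨χ, hχ⟩ := ih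
    obtain ⟨ψ, hψ⟩ := hh.exists_l2Pairing_eq_prod_mul χ Finset.univ
    refine ⟨ψ, fun β => ?_⟩
    rw [hψ, hχ, pow_succ', mul_assoc, indexWeight]

theorem l2Pairing_isBigO_inv_indexWeight_pow (hh : IsHermiteFamily h)
    (φ : 𝓢(EuclideanSpace ℝ (Fin d), ℝ)) (m : ℕ) :
    (fun β => l2Pairing (h β) φ) =O[⊤] fun β => (indexWeight β ^ m)⁻¹ := by
  obtain ⟨ψ, hψ⟩ := hh.exists_l2Pairing_eq_indexWeight_pow_mul φ m
  refine .of_bound (√(l2Pairing ψ ψ)) (.of_forall fun β => ?_)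
  have hpos : 0 < indexWeight β ^ m := pow_pos (indexWeight_pos β) m
  have hbessel : |l2Pairing (h β) ψ| ≤ √(l2Pairing ψ ψ) := by
    simpa [hh.l2Pairing_eq] using abs_l2Pairing_le (h β) ψ
  rw [hψ, abs_mul, abs_of_pos hpos] at hbessel
  rw [Real.norm_eq_abs, Real.norm_of_nonneg (inv_nonneg.2 hpos.le), ← div_eq_mul_inv,
    le_div_iff₀' hpos]
  exact hbessel

theorem summable_l2Pairing_smul (hh : IsHermiteFamily h) (φ : 𝓢(EuclideanSpace ℝ (Fin d), ℝ)) :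
    Summable fun β => l2Pairing (h β) φ • h β := by
  refine summable_of_summable_schwartz_seminorm fun k l => ?_
  obtain ⟨m, hm⟩ := hh.isPolyBounded_seminorm k l
  have hterm : (fun β => SchwartzMap.seminorm ℝ k l (l2Pairing (h β) φ • h β)) =O[⊤]
      fun β => (indexWeight β ^ 2)⁻¹ := by
    refine ((hh.l2Pairing_isBigO_inv_indexWeight_pow φ (m + 2)).norm_left.mul hm).congr
      (fun β => (map_smul_eq_mul _ _ _).symm) fun β => ?_
    have hne : indexWeight β ≠ 0 := (indexWeight_pos β).ne'
    rw [pow_add]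
    field_simp
  exact summable_of_isBigO summable_inv_indexWeight_sq (hterm.mono le_top)

end CoefficientDecay

section Completeness

theorem mulInner_mem_span (hh : IsHermiteFamily h) (w : EuclideanSpace ℝ (Fin d))
    {ψ : 𝓢(EuclideanSpace ℝ (Fin d), ℝ)} (hψ : ψ ∈ Submodule.span ℝ (Set.range h)) :
    mulInner w ψ ∈ Submodule.span ℝ (Set.range h) := by
  have hmem (β : Fin d → ℕ) : h β ∈ Submodule.span ℝ (Set.range h) :=
    Submodule.subset_span ⟨β, rfl⟩
  induction hψ using Submodule.span_induction with
  | mem ψ hψ =>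
    obtain ⟨β, rfl⟩ := hψ
    have hw : mulInner w (h β) = ∑ i, w i • mulInner (EuclideanSpace.single i 1) (h β) := by
      ext x
      simp [mulInner_apply, sum_apply, PiLp.inner_apply, Finset.sum_mul, mul_comm, mul_assoc]
    rw [hw]
    refine Submodule.sum_mem _ fun i _ => Submodule.smul_mem _ _ ?_
    rw [mulInner_eq_lowering_add_raising, hh.lowering_eq, hh.raising_eq]
    exact add_mem (Submodule.smul_mem _ _ (hmem _)) (Submodule.smul_mem _ _ (hmem _))
  | zero => simp
  | add ψ χ _ _ hψ hχ => rw [map_add]; exact add_mem hψ hχ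
  | smul c ψ _ hψ => rw [map_smul]; exact Submodule.smul_mem _ c hψ

theorem integral_inner_pow_mul_eq_zero (hh : IsHermiteFamily h)
    {φ : 𝓢(EuclideanSpace ℝ (Fin d), ℝ)} (hφ : ∀ β, l2Pairing (h β) φ = 0)
    (w : EuclideanSpace ℝ (Fin d)) (n : ℕ) : ∫ x, ⟪w, x⟫ ^ n * (φ x * h 0 x) = 0 := by
  have hspan : Submodule.span ℝ (Set.range h) ≤ (l2Pairing φ).ker := by
    rw [Submodule.span_le]
    rintro _ ⟨β, rfl⟩
    rw [SetLike.mem_coe, LinearMap.mem_ker]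
    exact (l2Pairing_comm _ _).trans (hφ β)
  have hmem : (mulInner w)^[n] (h 0) ∈ Submodule.span ℝ (Set.range h) :=
    Set.MapsTo.iterate (fun _ => hh.mulInner_mem_span w) n (Submodule.subset_span ⟨0, rfl⟩)
  have hiterate (x : EuclideanSpace ℝ (Fin d)) :
      (mulInner w)^[n] (h 0) x = ⟪w, x⟫ ^ n * h 0 x := by
    clear hmem
    induction n with
    | zero => simp
    | succ n ih =>
      rw [Function.iterate_succ_apply', mulInner_apply, ih, smul_eq_mul, pow_succ', mul_assoc]
  have hpairing : l2Pairing φ ((mulInner w)^[n] (h 0)) = 0 := hspan hmem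
  simpa only [l2Pairing_apply, hiterate, mul_left_comm] using hpairing

theorem integrable_exp_abs_inner_mul (hh : IsHermiteFamily h)
    (φ : 𝓢(EuclideanSpace ℝ (Fin d), ℝ)) (w : EuclideanSpace ℝ (Fin d)) :
    Integrable fun x => Real.exp |⟪w, x⟫| * |φ x * h 0 x| := by
  refine (φ.integrable.norm.const_mul (hermiteNorm 0 ^ d * Real.exp (‖w‖ ^ 2))).mono'
    (Continuous.aestronglyMeasurable (by fun_prop)) (.of_forall fun x => ?_)
  have hc : 0 ≤ hermiteNorm 0 ^ d := pow_nonneg (hermiteNorm_pos 0).le d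
  have hexponent : |⟪w, x⟫| - ‖x‖ ^ 2 / 4 ≤ ‖w‖ ^ 2 := by
    nlinarith [abs_real_inner_le_norm w x, sq_nonneg (‖w‖ - ‖x‖ / 2)]
  rw [hh 0 x, hermiteFunMulti_zero, Real.norm_of_nonneg (by positivity), abs_mul, abs_mul,
    abs_of_nonneg hc, Real.abs_exp]
  calc Real.exp |⟪w, x⟫| * (|φ x| * (hermiteNorm 0 ^ d * Real.exp (-(‖x‖ ^ 2 / 4))))
      = hermiteNorm 0 ^ d * Real.exp (|⟪w, x⟫| - ‖x‖ ^ 2 / 4) * ‖φ x‖ := by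
        rw [sub_eq_add_neg, Real.exp_add, Real.norm_eq_abs]; ring
    _ ≤ hermiteNorm 0 ^ d * Real.exp (‖w‖ ^ 2) * ‖φ x‖ := by gcongr

theorem eq_zero_of_l2Pairing_eq_zero (hh : IsHermiteFamily h)
    {φ : 𝓢(EuclideanSpace ℝ (Fin d), ℝ)} (hφ : ∀ β, l2Pairing (h β) φ = 0) : φ = 0 := by
  have hvanish : (fun x => ((φ x * h 0 x : ℝ) : ℂ)) = 0 := by
    refine eq_zero_of_integral_inner_pow_smul_eq_zero (by fun_prop) (fun w => ?_) fun w n => ?_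
    · simpa only [Complex.norm_real, Real.norm_eq_abs] using hh.integrable_exp_abs_inner_mul φ w
    · have hmoment := congrArg ((↑) : ℝ → ℂ) (hh.integral_inner_pow_mul_eq_zero hφ w n)
      rw [← integral_complex_ofReal] at hmoment
      simpa using hmoment
  ext x
  have hpos : 0 < h 0 x := by
    rw [hh 0 x, hermiteFunMulti_zero]
    exact mul_pos (pow_pos (hermiteNorm_pos 0) d) (Real.exp_pos _)
  have hmul : φ x * h 0 x = 0 := Complex.ofReal_eq_zero.1 (congrFun hvanish x)
  exact (mul_eq_zero.1 hmul).resolve_right hpos.ne'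

end Completeness

theorem hasSum_l2Pairing_smul (hh : IsHermiteFamily h) (φ : 𝓢(EuclideanSpace ℝ (Fin d), ℝ)) :
    HasSum (fun β => l2Pairing (h β) φ • h β) φ := by
  obtain ⟨ψ, hψ⟩ := hh.summable_l2Pairing_smul φ
  have hcoeff (α : Fin d → ℕ) : l2Pairing (h α) ψ = l2Pairing (h α) φ := by
    have hα := (l2Pairing (h α)).hasSum hψ
    simp only [map_smul, hh.l2Pairing_eq, smul_eq_mul, mul_ite, mul_one, mul_zero] at hα
    refine hα.unique ?_
    simpa using hasSum_single (f := fun β => if α = β then l2Pairing (h β) φ else 0) α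
      fun β hβ => if_neg hβ.symm
  have hzero : ψ - φ = 0 := hh.eq_zero_of_l2Pairing_eq_zero fun α => by
    rw [map_sub, hcoeff, sub_self]
  rwa [sub_eq_zero.1 hzero] at hψ

end IsHermiteFamily

/-- For a tempered distribution `T` and Schwartz `φ`, the family
`T(h_β)·∫ φ h_β` is absolutely summable with sum `T(φ)`. -/
theorem tempered_distribution_hermite_expansion (d : ℕ)
    (h : (Fin d → ℕ) → SchwartzMap (EuclideanSpace ℝ (Fin d)) ℝ)
    (hh : ∀ β x, h β x = hermiteFunMulti d β x)
    (T : SchwartzMap (EuclideanSpace ℝ (Fin d)) ℝ →L[ℝ] ℝ)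
    (φ : SchwartzMap (EuclideanSpace ℝ (Fin d)) ℝ) :
    Summable (fun β : Fin d → ℕ => |T (h β) * hermCoeff d (fun z => φ z) β|) ∧
    ∑' β : Fin d → ℕ, T (h β) * hermCoeff d (fun z => φ z) β = T φ := by
  have hfamily : IsHermiteFamily h := hh
  have hcoeff (β : Fin d → ℕ) : hermCoeff d (fun z => φ z) β = l2Pairing (h β) φ := by
    rw [l2Pairing_comm, l2Pairing_apply]
    simp only [hermCoeff, hh]
  have hsum : HasSum (fun β => T (h β) * hermCoeff d (fun z => φ z) β) (T φ) := by
    simpa [hcoeff, mul_comm] using T.hasSum (hfamily.hasSum_l2Pairing_smul φ)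
  exact ⟨hsum.summable.abs, hsum.tsum_eq⟩
end

section
/- Let T and S be tempered distributions in S′(ℝ^d) such that T(h_β) = S(h_β) for every multi-index β ∈ ℕ^d. Then T = S. -/
open MeasureTheory

/-!
Let `γ` be the Gaussian `exp (-‖x‖² / 4)`. If `F` is of exponential type, i.e. its `n`-th
derivative is bounded by `C * R ^ n`, then `γ` decays fast enough for `γ` times the Taylor series
of `F` to converge to `γ * F` in the Schwartz space, so `γ * F` is a limit of polynomial multiples
of `γ`. By the easy half of Paley–Wiener, Fourier transforms of compactly supported Schwartz
functions are of exponential type; they are also dense, whence `γ * ψ` is such a limit for every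
Schwartz function `ψ`. Every compactly supported smooth `f` is of this form, with `ψ = f / γ`, so
the polynomial multiples of `γ` are dense. As the `n`-th Hermite polynomial has degree `n`, the
Hermite functions span exactly these multiples, and a continuous linear map is determined by its
values on them.
-/

open scoped ContDiff FourierTransform SchwartzMap Topology

theorem pow_le_factorial_mul_exp {t : ℝ} (ht : 0 ≤ t) (k : ℕ) :
    t ^ k ≤ k.factorial * Real.exp t := by
  have := Real.pow_div_factorial_le_exp t ht k
  rwa [div_le_iff₀' (by positivity)] at this

section Schwartz

variable {ι E F : Type*} [NormedAddCommGroup E] [NormedSpace ℝ E]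
  [NormedAddCommGroup F] [NormedSpace ℝ F]

theorem seminorm_le_tsum_seminorm_of_hasSum [CompleteSpace F] {f : ι → 𝓢(E, F)} {g : 𝓢(E, F)}
    (hf : ∀ k m, Summable fun i ↦ SchwartzMap.seminorm ℝ k m (f i))
    (hg : ∀ x, HasSum (fun i ↦ f i x) (g x)) (k m : ℕ) :
    SchwartzMap.seminorm ℝ k m g ≤ ∑' i, SchwartzMap.seminorm ℝ k m (f i) := by
  refine SchwartzMap.seminorm_le_bound ℝ k m g (tsum_nonneg fun i ↦ apply_nonneg _ _) fun x ↦ ?_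
  have hderiv : iteratedFDeriv ℝ m g x = ∑' i, iteratedFDeriv ℝ m (f i) x := by
    rw [show (g : E → F) = fun y ↦ ∑' i, f i y from funext fun y ↦ (hg y).tsum_eq.symm]
    exact iteratedFDeriv_tsum_apply (N := ⊤) (fun i ↦ (f i).smooth _) (fun j _ ↦ hf 0 j)
      (fun j i y _ ↦ SchwartzMap.norm_iteratedFDeriv_le_seminorm ℝ (f i) j y) le_top x
  have hnorm : Summable fun i ↦ ‖iteratedFDeriv ℝ m (f i) x‖ :=
    (hf 0 m).of_nonneg_of_le (fun _ ↦ norm_nonneg _)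
      fun i ↦ SchwartzMap.norm_iteratedFDeriv_le_seminorm ℝ (f i) m x
  calc ‖x‖ ^ k * ‖iteratedFDeriv ℝ m g x‖
      ≤ ‖x‖ ^ k * ∑' i, ‖iteratedFDeriv ℝ m (f i) x‖ := by
        rw [hderiv]
        gcongr
        exact norm_tsum_le_tsum_norm hnorm
    _ = ∑' i, ‖x‖ ^ k * ‖iteratedFDeriv ℝ m (f i) x‖ := tsum_mul_left.symm
    _ ≤ ∑' i, SchwartzMap.seminorm ℝ k m (f i) :=
        (hnorm.mul_left _).tsum_le_tsum (fun i ↦ SchwartzMap.le_seminorm ℝ k m (f i) x) (hf k m)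

theorem hasSum_of_summable_seminorm [CompleteSpace F] {f : ι → 𝓢(E, F)} {g : 𝓢(E, F)}
    (hf : ∀ k m, Summable fun i ↦ SchwartzMap.seminorm ℝ k m (f i))
    (hg : ∀ x, HasSum (fun i ↦ f i x) (g x)) : HasSum f g := by
  rw [HasSum, SummationFilter.unconditional_filter,
    (schwartz_withSeminorms ℝ E F).tendsto_nhds]
  rintro ⟨k, m⟩ ε hε
  have htail := tendsto_tsum_compl_atTop_zero fun i ↦ SchwartzMap.seminorm ℝ k m (f i)
  filter_upwards [htail.eventually_lt_const hε] with s hs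
  rw [SchwartzMap.schwartzSeminormFamily_apply, map_sub_rev]
  refine (seminorm_le_tsum_seminorm_of_hasSum (f := fun i : {i // i ∉ s} ↦ f i)
    (fun k m ↦ (hf k m).subtype _) (fun x ↦ ?_) k m).trans_lt hs
  simpa [sub_apply] using (s.hasSum_compl_iff (f := fun i ↦ f i x)).2 (by simpa using hg x)

/-- A function `f` between normed spaces has superexponential decay if each of its derivatives,
multiplied by any exponential `exp (R * ‖x‖)`, is bounded. -/
def SuperexpDecay (f : E → F) : Prop :=
  ∀ (R : ℝ) (m : ℕ), ∃ B, ∀ x, Real.exp (R * ‖x‖) * ‖iteratedFDeriv ℝ m f x‖ ≤ B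

namespace SuperexpDecay

/-- A smooth function with superexponential decay, as a Schwartz function. -/
def toSchwartzMap {f : E → F} (hf : SuperexpDecay f) (hsmooth : ContDiff ℝ ∞ f) : 𝓢(E, F) where
  toFun := f
  smooth' := hsmooth
  decay' k m := by
    obtain ⟨B, hB⟩ := hf 1 m
    refine ⟨k.factorial * B, fun x ↦ ?_⟩
    calc ‖x‖ ^ k * ‖iteratedFDeriv ℝ m f x‖
        ≤ k.factorial * Real.exp ‖x‖ * ‖iteratedFDeriv ℝ m f x‖ := by
          gcongr
          exact pow_le_factorial_mul_exp (norm_nonneg x) k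
      _ ≤ k.factorial * B := by
          rw [mul_assoc]
          gcongr
          simpa using hB x

theorem exists_seminorm_smulLeftCLM_le {f : 𝓢(E, F)} (hf : SuperexpDecay f) (R : ℝ) (k m : ℕ) :
    ∃ K, ∀ (g : E → ℝ) (A : ℝ), g.HasTemperateGrowth →
      (∀ i ≤ m, ∀ x, ‖iteratedFDeriv ℝ i g x‖ ≤ A * Real.exp (R * ‖x‖)) →
      SchwartzMap.seminorm ℝ k m (SchwartzMap.smulLeftCLM F g f) ≤ K * A := by
  choose B hB using hf (R + 1)
  have hB_nonneg (j : ℕ) : 0 ≤ B j := le_trans (by positivity) (hB j 0)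
  refine ⟨∑ i ∈ Finset.range (m + 1), m.choose i * (k.factorial * B (m - i)),
    fun g A hg hA ↦ ?_⟩
  have hA_nonneg : 0 ≤ A := by simpa using (norm_nonneg _).trans (hA 0 m.zero_le 0)
  refine SchwartzMap.seminorm_le_bound ℝ k m _
    (mul_nonneg (Finset.sum_nonneg fun i _ ↦ by have := hB_nonneg (m - i); positivity)
      hA_nonneg) fun x ↦ ?_
  rw [SchwartzMap.smulLeftCLM_apply hg, Finset.sum_mul]
  refine (mul_le_mul_of_nonneg_left (norm_iteratedFDeriv_smul_le hg.1 (f.smooth ⊤) x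
    (mod_cast le_top)) (by positivity)).trans ?_
  rw [Finset.mul_sum]
  refine Finset.sum_le_sum fun i hi ↦ ?_
  calc ‖x‖ ^ k * (m.choose i * ‖iteratedFDeriv ℝ i g x‖ * ‖iteratedFDeriv ℝ (m - i) f x‖)
      ≤ k.factorial * Real.exp ‖x‖ * (m.choose i * (A * Real.exp (R * ‖x‖)) *
          ‖iteratedFDeriv ℝ (m - i) f x‖) := by
        gcongr
        · exact pow_le_factorial_mul_exp (norm_nonneg x) k
        · exact hA i (Finset.mem_range_succ_iff.1 hi) x
    _ = m.choose i * (k.factorial * (Real.exp ((R + 1) * ‖x‖) *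
          ‖iteratedFDeriv ℝ (m - i) f x‖)) * A := by
        rw [add_mul, Real.exp_add, one_mul]
        ring
    _ ≤ m.choose i * (k.factorial * B (m - i)) * A := by
        gcongr
        exact hB _ x

end SuperexpDecay

end Schwartz

section ContinuousMultilinearMap

variable {E F : Type*} [NormedAddCommGroup E] [NormedSpace ℝ E]
  [NormedAddCommGroup F] [NormedSpace ℝ F] {n : ℕ}

theorem norm_iteratedFDeriv_comp_le_of_opNorm_le_one {G : Type*} [NormedAddCommGroup G]
    [NormedSpace ℝ G] {f : E → F} {m : ℕ} (hf : ContDiff ℝ m f) {L : G →L[ℝ] E} (hL : ‖L‖ ≤ 1)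
    (x : G) : ‖iteratedFDeriv ℝ m (f ∘ L) x‖ ≤ ‖iteratedFDeriv ℝ m f (L x)‖ := by
  rw [L.iteratedFDeriv_comp_right hf x le_rfl]
  exact (ContinuousMultilinearMap.norm_compContinuousLinearMap_le _ _).trans <|
    mul_le_of_le_one_right (norm_nonneg _) <|
      Finset.prod_le_one (fun _ _ ↦ norm_nonneg _) fun _ _ ↦ hL

theorem norm_iteratedFDeriv_multilinear_diag_le (M : E [×n]→L[ℝ] F) (m : ℕ) (x : E) :
    ‖iteratedFDeriv ℝ m (fun y ↦ M fun _ ↦ y) x‖ ≤ n.descFactorial m * ‖M‖ * ‖x‖ ^ (n - m) := by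
  let L : E →L[ℝ] (Fin n → E) := ContinuousLinearMap.pi fun _ ↦ ContinuousLinearMap.id ℝ E
  have hL_apply (y : E) : ‖L y‖ ≤ ‖y‖ := (pi_norm_le_iff_of_nonneg (norm_nonneg y)).2 fun _ ↦ le_rfl
  have hL : ‖L‖ ≤ 1 := L.opNorm_le_bound zero_le_one (by simpa using hL_apply)
  calc ‖iteratedFDeriv ℝ m (M ∘ L) x‖
      ≤ ‖iteratedFDeriv ℝ m M (L x)‖ := norm_iteratedFDeriv_comp_le_of_opNorm_le_one M.contDiff hL x
    _ ≤ n.descFactorial m * ‖M‖ * ‖L x‖ ^ (n - m) := by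
        simpa using M.norm_iteratedFDeriv_le m (L x)
    _ ≤ n.descFactorial m * ‖M‖ * ‖x‖ ^ (n - m) := by
        gcongr
        exact hL_apply x

theorem hasTemperateGrowth_multilinear_diag (M : E [×n]→L[ℝ] F) :
    (fun x ↦ M fun _ ↦ x).HasTemperateGrowth := by
  refine ⟨M.contDiff.comp (contDiff_pi.2 fun _ ↦ contDiff_id),
    fun m ↦ ⟨n - m, n.descFactorial m * ‖M‖, fun x ↦ ?_⟩⟩
  refine (norm_iteratedFDeriv_multilinear_diag_le M m x).trans ?_
  gcongr
  linarith

theorem norm_iteratedFDeriv_multilinear_diag_le_exp {M : E [×n]→L[ℝ] F} {C R : ℝ} (hC : 0 ≤ C)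
    (hR : 0 ≤ R) (hM : ‖M‖ ≤ C * R ^ n / n.factorial) (m : ℕ) (x : E) :
    ‖iteratedFDeriv ℝ m (fun y ↦ M fun _ ↦ y) x‖ ≤
      C * (2 * R) ^ m * (1 / 2) ^ n * Real.exp (2 * R * ‖x‖) := by
  refine (norm_iteratedFDeriv_multilinear_diag_le M m x).trans ?_
  obtain hnm | hmn := lt_or_ge n m
  · rw [Nat.descFactorial_of_lt hnm]
    simpa using by positivity
  obtain ⟨j, rfl⟩ := Nat.exists_eq_add_of_le hmn
  have hfact : (j.factorial * (m + j).descFactorial m : ℝ) = (m + j).factorial := by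
    have := Nat.factorial_mul_descFactorial hmn
    rw [Nat.add_sub_cancel_left] at this
    exact_mod_cast this
  have hexp : (2 * R * ‖x‖) ^ j / j.factorial ≤ Real.exp (2 * R * ‖x‖) :=
    Real.pow_div_factorial_le_exp _ (by positivity) j
  calc (m + j).descFactorial m * ‖M‖ * ‖x‖ ^ (m + j - m)
      ≤ (m + j).descFactorial m * (C * R ^ (m + j) / (m + j).factorial) * ‖x‖ ^ j := by
        rw [Nat.add_sub_cancel_left]
        gcongr
    _ = C * (2 * R) ^ m * (1 / 2) ^ (m + j) * ((2 * R * ‖x‖) ^ j / j.factorial) := by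
        have : ((m + j).descFactorial m : ℝ) ≠ 0 := by
          exact_mod_cast (Nat.descFactorial_pos.2 hmn).ne'
        rw [← hfact]
        simp only [pow_add, mul_pow, div_pow, one_pow]
        field_simp
    _ ≤ C * (2 * R) ^ m * (1 / 2) ^ (m + j) * Real.exp (2 * R * ‖x‖) := by gcongr

end ContinuousMultilinearMap

section Taylor

variable {E F : Type*} [NormedAddCommGroup E] [NormedSpace ℝ E]
  [NormedAddCommGroup F] [NormedSpace ℝ F]

theorem hasSum_taylorSeries_of_norm_iteratedDeriv_le [CompleteSpace F] {g : ℝ → F}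
    (hg : ContDiff ℝ ∞ g) {C R : ℝ} (hbound : ∀ n t, ‖iteratedDeriv n g t‖ ≤ C * R ^ n) :
    HasSum (fun n : ℕ ↦ (n.factorial : ℝ)⁻¹ • iteratedDeriv n g 0) (g 1) := by
  have hsum : Summable fun n : ℕ ↦ (n.factorial : ℝ)⁻¹ • iteratedDeriv n g 0 := by
    refine .of_norm_bounded ((Real.summable_pow_div_factorial R).mul_left C) fun n ↦ ?_
    rw [norm_smul, norm_inv, RCLike.norm_natCast, ← mul_div_assoc, div_eq_inv_mul]
    gcongr
    exact hbound n 0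
  have hderivWithin (n : ℕ) : Set.EqOn (iteratedDerivWithin n g (Set.Icc 0 1))
      (iteratedDeriv n g) (Set.Icc 0 1) := fun t ht ↦
    iteratedDerivWithin_eq_iteratedDeriv (uniqueDiffOn_Icc zero_lt_one)
      (hg.contDiffAt.of_le (mod_cast le_top)) ht
  have hremainder (N : ℕ) :
      ‖g 1 - ∑ n ∈ Finset.range (N + 1), (n.factorial : ℝ)⁻¹ • iteratedDeriv n g 0‖ ≤
        C * R * (R ^ N / N.factorial) := by
    have := taylor_mean_remainder_bound (a := 0) (b := 1) (x := 1) (n := N) (C := C * R ^ (N + 1))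
      zero_le_one (hg.contDiffOn.of_le (mod_cast le_top)) (by simp)
      fun t ht ↦ (hderivWithin _ ht).symm ▸ hbound _ t
    have hpoly : taylorWithinEval g N (Set.Icc 0 1) 0 1 =
        ∑ n ∈ Finset.range (N + 1), (n.factorial : ℝ)⁻¹ • iteratedDeriv n g 0 := by
      rw [taylor_within_apply]
      exact Finset.sum_congr rfl fun n _ ↦ by rw [hderivWithin n (by simp)]; simp
    rw [hpoly] at this
    refine this.trans (le_of_eq ?_)
    rw [sub_zero, one_pow, pow_succ']
    ring
  have hlim : Filter.Tendsto (fun N : ℕ ↦ C * R * (R ^ N / N.factorial)) Filter.atTop (𝓝 0) := by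
    simpa using (Real.summable_pow_div_factorial R).tendsto_atTop_zero.const_mul (C * R)
  have hpartial := (squeeze_zero_norm hremainder hlim).const_sub (g 1)
  simp only [sub_sub_cancel, sub_zero] at hpartial
  rw [tendsto_nhds_unique hpartial
    (hsum.hasSum.tendsto_sum_nat.comp (Filter.tendsto_add_atTop_nat 1))]
  exact hsum.hasSum

theorem hasSum_taylorSeries_of_norm_iteratedFDeriv_le [CompleteSpace F] {f : E → F}
    (hf : ContDiff ℝ ∞ f) {C R : ℝ} (hbound : ∀ n x, ‖iteratedFDeriv ℝ n f x‖ ≤ C * R ^ n)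
    (x : E) :
    HasSum (fun n : ℕ ↦ ((n.factorial : ℝ)⁻¹ • iteratedFDeriv ℝ n f 0) fun _ ↦ x) (f x) := by
  let L : ℝ →L[ℝ] E := ContinuousLinearMap.toSpanSingleton ℝ x
  have hderiv (n : ℕ) (t : ℝ) :
      iteratedDeriv n (f ∘ L) t = iteratedFDeriv ℝ n f (t • x) fun _ ↦ x := by
    rw [iteratedDeriv_eq_iteratedFDeriv, L.iteratedFDeriv_comp_right hf t (mod_cast le_top)]
    simp [L]
  have hbound_line (n : ℕ) (t : ℝ) : ‖iteratedDeriv n (f ∘ L) t‖ ≤ C * (R * ‖x‖) ^ n := by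
    rw [hderiv, mul_pow, ← mul_assoc]
    exact (ContinuousMultilinearMap.le_opNorm _ _).trans <| by
      simpa using mul_le_mul_of_nonneg_right (hbound n (t • x)) (by positivity)
  simpa [hderiv, L] using
    hasSum_taylorSeries_of_norm_iteratedDeriv_le (hf.comp L.contDiff) hbound_line

end Taylor

section PolynomialMultiples

variable {E : Type*} [NormedAddCommGroup E] [NormedSpace ℝ E]

/-- The Schwartz functions `p * γ` with `p` a polynomial function on `E`, as the span of the
products of `γ` with homogeneous polynomials `x ↦ M (x, …, x)`, `M` continuous multilinear. -/
noncomputable def polynomialMultiples (γ : 𝓢(E, ℝ)) : Submodule ℝ 𝓢(E, ℝ) :=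
  Submodule.span ℝ {f | ∃ (n : ℕ) (M : E [×n]→L[ℝ] ℝ),
    f = SchwartzMap.smulLeftCLM ℝ (fun x ↦ M fun _ ↦ x) γ}

theorem smul_mem_closure_polynomialMultiples_of_norm_iteratedFDeriv_le {γ F : 𝓢(E, ℝ)}
    (hγ : SuperexpDecay γ) {C R : ℝ} (hR : 0 ≤ R)
    (hF : ∀ n x, ‖iteratedFDeriv ℝ n F x‖ ≤ C * R ^ n) :
    SchwartzMap.smulLeftCLM ℝ γ F ∈ closure (polynomialMultiples γ : Set 𝓢(E, ℝ)) := by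
  have hC : 0 ≤ C := by simpa using (norm_nonneg _).trans (hF 0 0)
  let M (n : ℕ) : E [×n]→L[ℝ] ℝ := (n.factorial : ℝ)⁻¹ • iteratedFDeriv ℝ n F 0
  have hM (n : ℕ) : ‖M n‖ ≤ C * R ^ n / n.factorial := by
    rw [norm_smul, norm_inv, RCLike.norm_natCast, div_eq_inv_mul]
    gcongr
    exact hF n 0
  let term (n : ℕ) : 𝓢(E, ℝ) := SchwartzMap.smulLeftCLM ℝ (fun x ↦ M n fun _ ↦ x) γ
  have hsummable (k m : ℕ) : Summable fun n ↦ SchwartzMap.seminorm ℝ k m (term n) := by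
    obtain ⟨K, hseminorm⟩ := hγ.exists_seminorm_smulLeftCLM_le (2 * R) k m
    have hterm (n : ℕ) :
        SchwartzMap.seminorm ℝ k m (term n) ≤ K * (C * (1 + 2 * R) ^ m * (1 / 2) ^ n) := by
      refine hseminorm _ _ (hasTemperateGrowth_multilinear_diag (M n)) fun i hi x ↦ ?_
      refine (norm_iteratedFDeriv_multilinear_diag_le_exp hC hR (hM n) i x).trans ?_
      have : (2 * R) ^ i ≤ (1 + 2 * R) ^ m :=
        (pow_le_pow_left₀ (by positivity) (by linarith) i).trans
          (pow_le_pow_right₀ (by linarith) hi)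
      gcongr
    exact .of_nonneg_of_le (fun _ ↦ apply_nonneg _ _) hterm
      ((summable_geometric_two.mul_left _).mul_left K)
  have hsum : HasSum term (SchwartzMap.smulLeftCLM ℝ γ F) :=
    hasSum_of_summable_seminorm hsummable fun x ↦ by
      simp only [term, smul_eq_mul, mul_comm _ (γ x),
        SchwartzMap.smulLeftCLM_apply_apply (hasTemperateGrowth_multilinear_diag _),
        SchwartzMap.smulLeftCLM_apply_apply γ.hasTemperateGrowth]
      exact (hasSum_taylorSeries_of_norm_iteratedFDeriv_le (F.smooth ⊤) hF x).mul_left (γ x)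
  exact mem_closure_of_tendsto hsum <| .of_forall fun s ↦
    Submodule.sum_mem _ fun n _ ↦ Submodule.subset_span ⟨n, M n, rfl⟩

end PolynomialMultiples

section Fourier

variable {E F : Type*} [NormedAddCommGroup E] [InnerProductSpace ℝ E] [FiniteDimensional ℝ E]
  [MeasurableSpace E] [BorelSpace E] [NormedAddCommGroup F] [NormedSpace ℂ F]

theorem norm_iteratedFDeriv_fourier_le_of_support_subset {f : E → F} (hf : Integrable f) {r : ℝ}
    (hsupp : Function.support f ⊆ Metric.closedBall 0 r) (n : ℕ) (x : E) :
    ‖iteratedFDeriv ℝ n (𝓕 f) x‖ ≤ (∫ v, ‖f v‖) * (2 * Real.pi * r) ^ n := by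
  have hmoment_le (k : ℕ) (v : E) : ‖v‖ ^ k * ‖f v‖ ≤ r ^ k * ‖f v‖ := by
    by_cases hv : f v = 0
    · simp [hv]
    · gcongr
      simpa using hsupp hv
  have hmoment (k : ℕ) : Integrable fun v ↦ ‖v‖ ^ k * ‖f v‖ :=
    (hf.norm.const_mul (r ^ k)).mono'
      ((continuous_norm.pow k).aestronglyMeasurable.mul hf.aestronglyMeasurable.norm)
      (.of_forall fun v ↦ by simpa using hmoment_le k v)
  rw [Real.iteratedFDeriv_fourier (N := ⊤) (fun k _ ↦ hmoment k) hf.aestronglyMeasurable le_top]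
  refine (VectorFourier.norm_fourierIntegral_le_integral_norm ..).trans ?_
  rw [← integral_mul_const]
  refine integral_mono_of_nonneg (.of_forall fun _ ↦ norm_nonneg _) (hf.norm.mul_const _)
    (.of_forall fun v ↦ ?_)
  calc ‖VectorFourier.fourierPowSMulRight (innerSL ℝ) f v n‖
      ≤ (2 * Real.pi * ‖innerSL ℝ (E := E)‖) ^ n * ‖v‖ ^ n * ‖f v‖ :=
        VectorFourier.norm_fourierPowSMulRight_le ..
    _ ≤ (2 * Real.pi * 1) ^ n * (r ^ n * ‖f v‖) := by
        rw [mul_assoc _ (‖v‖ ^ n)]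
        gcongr ?_ ^ n * ?_
        · exact mul_le_mul_of_nonneg_left (norm_innerSL_le ℝ) (by positivity)
        · exact hmoment_le n v
    _ = ‖f v‖ * (2 * Real.pi * r) ^ n := by ring

end Fourier

section CompactSupport

variable {E F : Type*} [NormedAddCommGroup E] [NormedSpace ℝ E]
  [NormedAddCommGroup F] [NormedSpace ℝ F]

theorem norm_iteratedFDeriv_comp_smul_le {w : E → F} (hw : ContDiff ℝ ∞ w) {i : ℕ} {B : ℝ}
    (hB : ∀ y, ‖iteratedFDeriv ℝ i w y‖ ≤ B * ‖y‖) {c : ℝ} (hc : |c| ≤ 1) (x : E) :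
    ‖iteratedFDeriv ℝ i (fun y ↦ w (c • y)) x‖ ≤ |c| * (B * ‖x‖) := by
  rw [iteratedFDeriv_comp_const_smul c (hw.of_le (mod_cast le_top)), norm_smul, norm_pow,
    Real.norm_eq_abs]
  calc |c| ^ i * ‖iteratedFDeriv ℝ i w (c • x)‖
      ≤ 1 * ‖iteratedFDeriv ℝ i w (c • x)‖ := by
        gcongr
        exact pow_le_one₀ (abs_nonneg c) hc
    _ ≤ B * ‖c • x‖ := (one_mul _).trans_le (hB _)
    _ = |c| * (B * ‖x‖) := by rw [norm_smul, Real.norm_eq_abs]; ring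

theorem hasTemperateGrowth_comp_smul {w : E → F} (hw : ContDiff ℝ ∞ w)
    (hw_le : ∀ i, ∃ B, ∀ y, ‖iteratedFDeriv ℝ i w y‖ ≤ B * ‖y‖) {c : ℝ} (hc : |c| ≤ 1) :
    (fun x ↦ w (c • x)).HasTemperateGrowth := by
  choose B hB using hw_le
  refine ⟨hw.comp (contDiff_id.const_smul c), fun i ↦ ⟨1, |B i|, fun x ↦ ?_⟩⟩
  calc ‖iteratedFDeriv ℝ i (fun y ↦ w (c • y)) x‖
      ≤ |c| * (B i * ‖x‖) := norm_iteratedFDeriv_comp_smul_le hw (hB i) hc x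
    _ ≤ 1 * (|B i| * (1 + ‖x‖)) := by
        gcongr
        · exact (norm_nonneg _).trans (hB i x)
        · exact le_abs_self (B i)
        · exact le_add_of_nonneg_left zero_le_one
    _ = |B i| * (1 + ‖x‖) ^ 1 := by rw [one_mul, pow_one]

theorem exists_seminorm_smulLeftCLM_comp_smul_le {w : E → ℝ} (hw : ContDiff ℝ ∞ w)
    (hw_le : ∀ i, ∃ B, ∀ y, ‖iteratedFDeriv ℝ i w y‖ ≤ B * ‖y‖) (f : 𝓢(E, F)) (k m : ℕ) :
    ∃ K, ∀ c : ℝ, |c| ≤ 1 →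
      SchwartzMap.seminorm ℝ k m (SchwartzMap.smulLeftCLM F (fun x ↦ w (c • x)) f) ≤ |c| * K := by
  have hgrowth {c : ℝ} (hc : |c| ≤ 1) : (fun x ↦ w (c • x)).HasTemperateGrowth :=
    hasTemperateGrowth_comp_smul hw hw_le hc
  choose B hB using hw_le
  refine ⟨∑ i ∈ Finset.range (m + 1),
    m.choose i * |B i| * SchwartzMap.seminorm ℝ (k + 1) (m - i) f, fun c hc ↦ ?_⟩
  refine SchwartzMap.seminorm_le_bound ℝ k m _ (by positivity) fun x ↦ ?_
  rw [SchwartzMap.smulLeftCLM_apply (hgrowth hc), Finset.mul_sum]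
  refine (mul_le_mul_of_nonneg_left (norm_iteratedFDeriv_smul_le (hgrowth hc).1 (f.smooth ⊤) x
    (mod_cast le_top)) (by positivity)).trans ?_
  rw [Finset.mul_sum]
  refine Finset.sum_le_sum fun i _ ↦ ?_
  calc ‖x‖ ^ k * (m.choose i * ‖iteratedFDeriv ℝ i (fun y ↦ w (c • y)) x‖ *
        ‖iteratedFDeriv ℝ (m - i) f x‖)
      ≤ ‖x‖ ^ k * (m.choose i * (|c| * (|B i| * ‖x‖)) * ‖iteratedFDeriv ℝ (m - i) f x‖) := by
        gcongr
        refine (norm_iteratedFDeriv_comp_smul_le hw (hB i) hc x).trans ?_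
        gcongr
        exact le_abs_self (B i)
    _ = |c| * (m.choose i * |B i| * (‖x‖ ^ (k + 1) * ‖iteratedFDeriv ℝ (m - i) f x‖)) := by ring
    _ ≤ |c| * (m.choose i * |B i| * SchwartzMap.seminorm ℝ (k + 1) (m - i) f) := by
        gcongr
        exact SchwartzMap.le_seminorm ℝ _ _ f x

theorem tendsto_smulLeftCLM_comp_smul {w : E → ℝ} (hw : ContDiff ℝ ∞ w)
    (hw_le : ∀ i, ∃ B, ∀ y, ‖iteratedFDeriv ℝ i w y‖ ≤ B * ‖y‖) (f : 𝓢(E, F)) :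
    Filter.Tendsto (fun c : ℝ ↦ SchwartzMap.smulLeftCLM F (fun x ↦ w (c • x)) f) (𝓝 0) (𝓝 0) := by
  rw [(schwartz_withSeminorms ℝ E F).tendsto_nhds]
  rintro ⟨k, m⟩ ε hε
  obtain ⟨K, hK⟩ := exists_seminorm_smulLeftCLM_comp_smul_le hw hw_le f k m
  have habs : Filter.Tendsto (fun c : ℝ ↦ |c|) (𝓝 0) (𝓝 0) := by
    simpa using continuous_abs.tendsto (0 : ℝ)
  have hlim : Filter.Tendsto (fun c : ℝ ↦ |c| * K) (𝓝 0) (𝓝 0) := by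
    simpa using habs.mul_const K
  filter_upwards [habs.eventually_le_const zero_lt_one, hlim.eventually_lt_const hε] with c hc hcK
  rw [SchwartzMap.schwartzSeminormFamily_apply, sub_zero]
  exact (hK c hc).trans_lt hcK

variable [FiniteDimensional ℝ E]

theorem exists_norm_iteratedFDeriv_one_sub_contDiffBump_le (χ : ContDiffBump (0 : E)) (i : ℕ) :
    ∃ B, ∀ y, ‖iteratedFDeriv ℝ i (fun x ↦ 1 - χ x) y‖ ≤ B * ‖y‖ := by
  let χS : 𝓢(E, ℝ) := χ.hasCompactSupport.toSchwartzMap χ.contDiff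
  let B := 1 + SchwartzMap.seminorm ℝ 0 i χS
  have hB_nonneg : 0 ≤ B := by positivity
  have hle (y : E) : ‖iteratedFDeriv ℝ i (fun x ↦ 1 - χ x) y‖ ≤ B := by
    rw [show (fun x ↦ 1 - χ x) = (fun _ ↦ 1) - ⇑χ from rfl,
      iteratedFDeriv_sub_apply contDiffAt_const χ.contDiffAt]
    refine (norm_sub_le _ _).trans
      (add_le_add ?_ (SchwartzMap.norm_iteratedFDeriv_le_seminorm ℝ χS i y))
    rcases i with _ | i
    · simp
    · simp [iteratedFDeriv_const_of_ne i.succ_ne_zero]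
  -- `1 - χ` vanishes on the ball of radius `χ.rIn`, so only `‖y‖ ≥ χ.rIn` matters.
  refine ⟨B / χ.rIn, fun y ↦ ?_⟩
  obtain hy | hy := lt_or_ge ‖y‖ χ.rIn
  · have hzero : (fun x ↦ 1 - χ x) =ᶠ[𝓝 y] fun _ ↦ 0 := by
      filter_upwards [Metric.isOpen_ball.mem_nhds (mem_ball_zero_iff.2 hy)] with z hz
      rw [χ.one_of_mem_closedBall (Metric.ball_subset_closedBall hz), sub_self]
    rw [(hzero.iteratedFDeriv ℝ i).eq_of_nhds]
    simpa using mul_nonneg (div_nonneg hB_nonneg χ.rIn_pos.le) (norm_nonneg y)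
  · rw [div_mul_eq_mul_div, le_div_iff₀ χ.rIn_pos]
    exact mul_le_mul (hle y) hy χ.rIn_pos.le hB_nonneg

theorem dense_hasCompactSupport : Dense {f : 𝓢(E, F) | HasCompactSupport f} := by
  intro f
  let χ : ContDiffBump (0 : E) := default
  have hsmul_χ {c : ℝ} (hc : c ≠ 0) : HasCompactSupport fun x ↦ χ (c • x) :=
    χ.hasCompactSupport.comp_smul hc
  have hlim : Filter.Tendsto
      (fun c : ℝ ↦ f - SchwartzMap.smulLeftCLM F (fun x ↦ 1 - χ (c • x)) f) (𝓝[≠] 0) (𝓝 f) := by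
    simpa using ((tendsto_smulLeftCLM_comp_smul (contDiff_const.sub χ.contDiff)
      (exists_norm_iteratedFDeriv_one_sub_contDiffBump_le χ) f).const_sub f).mono_left
        nhdsWithin_le_nhds
  refine mem_closure_of_tendsto hlim (eventually_mem_nhdsWithin.mono fun c hc ↦ ?_)
  have hχ : (fun x ↦ 1 - χ (c • x)).HasTemperateGrowth := .sub (.const 1) <|
    (hsmul_χ hc).hasTemperateGrowth (χ.contDiff.comp (contDiff_id.const_smul c))
  have heq : ⇑(f - SchwartzMap.smulLeftCLM F (fun x ↦ 1 - χ (c • x)) f) =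
      fun x ↦ χ (c • x) • f x := by
    ext x
    rw [sub_apply, SchwartzMap.smulLeftCLM_apply_apply hχ, sub_smul, one_smul, sub_sub_cancel]
  rw [Set.mem_ofPred_eq, heq]
  exact (hsmul_χ hc).smul_right

end CompactSupport

section Density

variable {E : Type*} [NormedAddCommGroup E] [InnerProductSpace ℝ E] [FiniteDimensional ℝ E]
  {γ : 𝓢(E, ℝ)}

theorem smul_re_fourier_mem_closure_polynomialMultiples [MeasurableSpace E] [BorelSpace E]
    (hγ : SuperexpDecay γ) {φ : 𝓢(E, ℂ)} (hφ : HasCompactSupport φ) :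
    SchwartzMap.smulLeftCLM ℝ γ (SchwartzMap.postcompCLM Complex.reCLM (𝓕 φ)) ∈
      closure (polynomialMultiples γ : Set 𝓢(E, ℝ)) := by
  obtain ⟨r, hr_pos, hr⟩ := hφ.isCompact.isBounded.subset_closedBall_lt 0 0
  refine smul_mem_closure_polynomialMultiples_of_norm_iteratedFDeriv_le hγ
    (C := ∫ v, ‖φ v‖) (R := 2 * Real.pi * r) (by positivity) fun n x ↦ ?_
  calc ‖iteratedFDeriv ℝ n (SchwartzMap.postcompCLM Complex.reCLM (𝓕 φ)) x‖
      ≤ ‖Complex.reCLM‖ * ‖iteratedFDeriv ℝ n (𝓕 φ : 𝓢(E, ℂ)) x‖ :=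
        Complex.reCLM.norm_iteratedFDeriv_comp_left ((𝓕 φ).contDiffAt ⊤) (mod_cast le_top)
    _ = ‖iteratedFDeriv ℝ n (𝓕 (φ : E → ℂ)) x‖ := by
        rw [Complex.reCLM_norm, one_mul, SchwartzMap.fourier_coe]
    _ ≤ (∫ v, ‖φ v‖) * (2 * Real.pi * r) ^ n :=
        norm_iteratedFDeriv_fourier_le_of_support_subset φ.integrable
          ((subset_tsupport φ).trans hr) n x

theorem smul_mem_closure_polynomialMultiples (hγ : SuperexpDecay γ) (ψ : 𝓢(E, ℝ)) :
    SchwartzMap.smulLeftCLM ℝ γ ψ ∈ closure (polynomialMultiples γ : Set 𝓢(E, ℝ)) := by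
  borelize E
  let Φ (φ : 𝓢(E, ℂ)) : 𝓢(E, ℝ) :=
    SchwartzMap.smulLeftCLM ℝ γ (SchwartzMap.postcompCLM Complex.reCLM (𝓕 φ))
  have hΦ : Continuous Φ := (SchwartzMap.smulLeftCLM ℝ γ).continuous.comp <|
    (SchwartzMap.postcompCLM Complex.reCLM).continuous.comp FourierTransform.continuous_fourier
  have hmem (φ : 𝓢(E, ℂ)) : Φ φ ∈ closure (polynomialMultiples γ : Set 𝓢(E, ℝ)) :=
    dense_hasCompactSupport.induction
      (fun _ ↦ smul_re_fourier_mem_closure_polynomialMultiples hγ) (isClosed_closure.preimage hΦ) φ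
  have hψ : SchwartzMap.postcompCLM Complex.reCLM
      (𝓕 (𝓕⁻ (SchwartzMap.postcompCLM Complex.ofRealCLM ψ))) = ψ := by
    rw [FourierTransform.fourier_fourierInv_eq]
    ext x
    simp
  simpa only [Φ, hψ] using hmem (𝓕⁻ (SchwartzMap.postcompCLM Complex.ofRealCLM ψ))

theorem dense_polynomialMultiples (hγ : SuperexpDecay γ) (hγ_ne : ∀ x, γ x ≠ 0) :
    Dense (polynomialMultiples γ : Set 𝓢(E, ℝ)) := by
  refine dense_closure.1 (dense_hasCompactSupport.mono fun f hf ↦ ?_)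
  have hcompact : HasCompactSupport fun x ↦ (γ x)⁻¹ * f x := HasCompactSupport.mul_left hf
  have hsmooth : ContDiff ℝ ∞ fun x ↦ (γ x)⁻¹ * f x :=
    ((γ.smooth ⊤).inv hγ_ne).mul (f.smooth ⊤)
  have hdiv : SchwartzMap.smulLeftCLM ℝ γ (hcompact.toSchwartzMap hsmooth) = f := by
    ext x
    simp [SchwartzMap.smulLeftCLM_apply_apply γ.hasTemperateGrowth, hγ_ne x]
  exact hdiv ▸ smul_mem_closure_polynomialMultiples hγ _

end Density

section Gaussian

variable {E : Type*}

theorem norm_iteratedFDeriv_exp_comp_le [NormedAddCommGroup E] [NormedSpace ℝ E] {q : E → ℝ}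
    (hq : q.HasTemperateGrowth) (m : ℕ) :
    ∃ (k : ℕ) (C : ℝ), 0 ≤ C ∧ ∀ x,
      ‖iteratedFDeriv ℝ m (fun y ↦ Real.exp (q y)) x‖ ≤
        C * (1 + ‖x‖) ^ k * Real.exp (q x) := by
  obtain ⟨k, C, hC, hq_le⟩ := hq.norm_iteratedFDeriv_le_uniform m
  refine ⟨k * m, m.factorial * (1 + C) ^ m, by positivity, fun x ↦ ?_⟩
  have hx : 1 ≤ 1 + ‖x‖ := le_add_of_nonneg_right (norm_nonneg x)
  let D := (1 + C) * (1 + ‖x‖) ^ k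
  have hD : 1 ≤ D := one_le_mul_of_one_le_of_one_le (by linarith) (one_le_pow₀ hx)
  calc ‖iteratedFDeriv ℝ m (Real.exp ∘ q) x‖
      ≤ m.factorial * Real.exp (q x) * D ^ m := by
        refine norm_iteratedFDeriv_comp_le Real.contDiff_exp hq.1 (mod_cast le_top) x
          (fun i _ ↦ ?_) fun i hi him ↦ ?_
        · rw [norm_iteratedFDeriv_eq_norm_iteratedDeriv, iteratedDeriv_eq_iterate,
            Real.iter_deriv_exp, Real.norm_eq_abs, Real.abs_exp]
        · calc ‖iteratedFDeriv ℝ i q x‖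
              ≤ C * (1 + ‖x‖) ^ k := hq_le i him x
            _ ≤ D := mul_le_mul_of_nonneg_right (by linarith) (by positivity)
            _ ≤ D ^ i := le_self_pow₀ hD (by lia)
    _ = m.factorial * (1 + C) ^ m * (1 + ‖x‖) ^ (k * m) * Real.exp (q x) := by
        rw [mul_pow, ← pow_mul]
        ring

variable [NormedAddCommGroup E] [InnerProductSpace ℝ E] {b : ℝ}

theorem superexpDecay_exp_neg_mul_norm_sq (hb : 0 < b) :
    SuperexpDecay fun x : E ↦ Real.exp (-(b * ‖x‖ ^ 2)) := by
  intro R m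
  have hq : (fun x : E ↦ -(b * ‖x‖ ^ 2)).HasTemperateGrowth :=
    ((Function.HasTemperateGrowth.const b).mul (Function.hasTemperateGrowth_norm_sq E)).neg
  obtain ⟨k, C, hC, hderiv⟩ := norm_iteratedFDeriv_exp_comp_le hq m
  refine ⟨C * k.factorial * Real.exp (1 + (R + 1) ^ 2 / (4 * b)), fun x ↦ ?_⟩
  have hsquare : R * ‖x‖ + (1 + ‖x‖) + -(b * ‖x‖ ^ 2) ≤ 1 + (R + 1) ^ 2 / (4 * b) := by
    have : 1 + (R + 1) ^ 2 / (4 * b) - (R * ‖x‖ + (1 + ‖x‖) + -(b * ‖x‖ ^ 2)) =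
        b * (‖x‖ - (R + 1) / (2 * b)) ^ 2 := by
      field_simp
      ring
    nlinarith [mul_nonneg hb.le (sq_nonneg (‖x‖ - (R + 1) / (2 * b)))]
  calc Real.exp (R * ‖x‖) * ‖iteratedFDeriv ℝ m (fun y : E ↦ Real.exp (-(b * ‖y‖ ^ 2))) x‖
      ≤ Real.exp (R * ‖x‖) *
          (C * (k.factorial * Real.exp (1 + ‖x‖)) * Real.exp (-(b * ‖x‖ ^ 2))) := by
        gcongr
        refine (hderiv x).trans ?_
        gcongr
        exact pow_le_factorial_mul_exp (by positivity) k
    _ = C * k.factorial * Real.exp (R * ‖x‖ + (1 + ‖x‖) + -(b * ‖x‖ ^ 2)) := by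
        rw [Real.exp_add (R * ‖x‖ + (1 + ‖x‖)), Real.exp_add (R * ‖x‖)]
        ring
    _ ≤ C * k.factorial * Real.exp (1 + (R + 1) ^ 2 / (4 * b)) := by gcongr

/-- The Gaussian `x ↦ exp (-b * ‖x‖ ^ 2)`, `0 < b`, as a Schwartz function. -/
noncomputable def gaussianSchwartzMap (E : Type*) [NormedAddCommGroup E] [InnerProductSpace ℝ E]
    (hb : 0 < b) : 𝓢(E, ℝ) :=
  (superexpDecay_exp_neg_mul_norm_sq (E := E) hb).toSchwartzMap
    ((contDiff_const.mul (contDiff_norm_sq ℝ)).neg.exp)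

theorem gaussianSchwartzMap_apply (hb : 0 < b) (x : E) :
    gaussianSchwartzMap E hb x = Real.exp (-(b * ‖x‖ ^ 2)) :=
  rfl

end Gaussian

section MvPolynomial

variable {ι : Type*}

theorem exists_mvPolynomial_eval_eq_multilinear_diag [Finite ι] {n : ℕ}
    (M : MultilinearMap ℝ (fun _ : Fin n ↦ EuclideanSpace ℝ ι) ℝ) :
    ∃ p : MvPolynomial ι ℝ, ∀ x : EuclideanSpace ℝ ι, MvPolynomial.eval x p = M fun _ ↦ x := by
  classical
  cases nonempty_fintype ι
  let e := EuclideanSpace.basisFun ι ℝ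
  refine ⟨∑ s : Fin n → ι, MvPolynomial.C (M fun j ↦ e (s j)) * ∏ j, MvPolynomial.X (s j),
    fun x ↦ ?_⟩
  calc MvPolynomial.eval x
        (∑ s : Fin n → ι, MvPolynomial.C (M fun j ↦ e (s j)) * ∏ j, MvPolynomial.X (s j))
      = ∑ s : Fin n → ι, M fun j ↦ x (s j) • e (s j) := by
        simp only [map_sum, map_mul, map_prod, MvPolynomial.eval_C, MvPolynomial.eval_X,
          M.map_smul_univ, smul_eq_mul, mul_comm]
    _ = M fun _ ↦ ∑ i, x i • e i := (M.map_sum fun _ i ↦ x i • e i).symm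
    _ = M fun _ ↦ x := by
        rw [show ∑ i, x i • e i = x by simpa [e] using e.sum_repr x]

variable [Fintype ι]

open scoped Pointwise in
theorem span_prod_toMvPolynomial_eq_top {R : Type*} [CommRing R] (S : Polynomial.Sequence R)
    (hS : ∀ n, IsUnit (S n).leadingCoeff) :
    Submodule.span R (Set.range fun β : ι → ℕ ↦ ∏ i, (S (β i)).toMvPolynomial i) = ⊤ := by
  let A (i : ι) : Set (MvPolynomial ι R) := Set.range fun n ↦ (S n).toMvPolynomial i
  have hrange : Set.range (fun β : ι → ℕ ↦ ∏ i, (S (β i)).toMvPolynomial i) = ∏ i, A i := by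
    ext p
    simp only [Set.mem_fintype_prod, A, Set.mem_range]
    constructor
    · rintro ⟨β, rfl⟩
      exact ⟨_, fun i ↦ ⟨β i, rfl⟩, rfl⟩
    · rintro ⟨g, hg, rfl⟩
      choose β hβ using hg
      exact ⟨β, Finset.prod_congr rfl fun i _ ↦ hβ i⟩
  have hspan (i : ι) (p : Polynomial R) : p.toMvPolynomial i ∈ Submodule.span R (A i) := by
    have hp : p ∈ Submodule.span R (Set.range S) := S.span hS ▸ Submodule.mem_top
    have := Submodule.mem_map_of_mem (f := (Polynomial.toMvPolynomial i).toLinearMap) hp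
    rwa [Submodule.map_span, ← Set.range_comp] at this
  have hprod (g : ι → Polynomial R) :
      ∏ i, (g i).toMvPolynomial i ∈ Submodule.span R (∏ i, A i) := by
    rw [← Submodule.prod_span]
    have := Submodule.subset_span (R := R) <| Set.finsetProd_mem_finsetProd Finset.univ
      (fun i ↦ (Submodule.span R (A i) : Set (MvPolynomial ι R))) _ fun i _ ↦ hspan i (g i)
    simpa only [← Submodule.prod_span, Submodule.span_eq, SetLike.mem_coe] using this
  rw [hrange, eq_top_iff, ← (MvPolynomial.basisMonomials ι R).span_eq, Submodule.span_le]
  rintro _ ⟨s, rfl⟩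
  have := hprod fun i ↦ Polynomial.X ^ s i
  simpa [MvPolynomial.monomial_eq, Finsupp.prod_fintype] using this

theorem hasTemperateGrowth_mvPolynomial_eval (p : MvPolynomial ι ℝ) :
    (fun x : EuclideanSpace ℝ ι ↦ MvPolynomial.eval x p).HasTemperateGrowth := by
  induction p using MvPolynomial.induction_on with
  | C a => simp
  | add p q hp hq =>
    simp only [map_add]
    exact hp.add hq
  | mul_X p i hp =>
    simp only [map_mul, MvPolynomial.eval_X]
    exact hp.mul (EuclideanSpace.proj (𝕜 := ℝ) i : EuclideanSpace ℝ ι →L[ℝ] ℝ).hasTemperateGrowth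

/-- The linear map sending a polynomial `p` to the Schwartz function `p * γ`. -/
noncomputable def mvPolynomialSMul (γ : 𝓢(EuclideanSpace ℝ ι, ℝ)) :
    MvPolynomial ι ℝ →ₗ[ℝ] 𝓢(EuclideanSpace ℝ ι, ℝ) where
  toFun p := SchwartzMap.smulLeftCLM ℝ (fun x : EuclideanSpace ℝ ι ↦ MvPolynomial.eval x p) γ
  map_add' p q := by
    ext x
    rw [add_apply]
    iterate 3 rw [SchwartzMap.smulLeftCLM_apply_apply (hasTemperateGrowth_mvPolynomial_eval _)]
    rw [map_add, add_smul]
  map_smul' c p := by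
    ext x
    rw [RingHom.id_apply, smul_apply]
    iterate 2 rw [SchwartzMap.smulLeftCLM_apply_apply (hasTemperateGrowth_mvPolynomial_eval _)]
    rw [MvPolynomial.smul_eval, smul_eq_mul, smul_eq_mul, smul_eq_mul, mul_assoc]

theorem mvPolynomialSMul_apply (γ : 𝓢(EuclideanSpace ℝ ι, ℝ)) (p : MvPolynomial ι ℝ)
    (x : EuclideanSpace ℝ ι) : mvPolynomialSMul γ p x = MvPolynomial.eval x p * γ x :=
  SchwartzMap.smulLeftCLM_apply_apply (hasTemperateGrowth_mvPolynomial_eval p) γ x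

theorem polynomialMultiples_le_range_mvPolynomialSMul (γ : 𝓢(EuclideanSpace ℝ ι, ℝ)) :
    polynomialMultiples γ ≤ LinearMap.range (mvPolynomialSMul γ) := by
  refine Submodule.span_le.2 ?_
  rintro _ ⟨n, M, rfl⟩
  obtain ⟨p, hp⟩ := exists_mvPolynomial_eval_eq_multilinear_diag M.toMultilinearMap
  exact ⟨p, congrArg (SchwartzMap.smulLeftCLM ℝ · γ) (funext hp)⟩

theorem dense_span_range_mvPolynomialSMul_prod {γ : 𝓢(EuclideanSpace ℝ ι, ℝ)}
    (hγ : SuperexpDecay γ) (hγ_ne : ∀ x, γ x ≠ 0) (S : Polynomial.Sequence ℝ) :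
    Dense (Submodule.span ℝ (Set.range fun β : ι → ℕ ↦
      mvPolynomialSMul γ (∏ i, (S (β i)).toMvPolynomial i)) : Set 𝓢(EuclideanSpace ℝ ι, ℝ)) := by
  have hS (n : ℕ) : IsUnit (S n).leadingCoeff :=
    (Polynomial.leadingCoeff_ne_zero.2 (S.ne_zero n)).isUnit
  refine (dense_polynomialMultiples hγ hγ_ne).mono ?_
  rw [SetLike.coe_subset_coe]
  refine (polynomialMultiples_le_range_mvPolynomialSMul γ).trans_eq ?_
  rw [LinearMap.range_eq_map, ← span_prod_toMvPolynomial_eq_top S hS, Submodule.map_span,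
    ← Set.range_comp]
  rfl

end MvPolynomial

section Hermite

/-- The probabilists' Hermite polynomials, as a sequence of real polynomials with the `n`-th of
degree `n`. -/
noncomputable def hermiteSeq : Polynomial.Sequence ℝ where
  elems' n := (Polynomial.hermite n).map (Int.castRingHom ℝ)
  degree_eq' n := by rw [(Polynomial.hermite_monic n).degree_map, Polynomial.degree_hermite]

theorem hermitePoly_eq_eval_hermiteSeq (n : ℕ) (x : ℝ) :
    hermitePoly n x = (hermiteSeq n).eval x := by
  change hermitePoly n x = ((Polynomial.hermite n).map (Int.castRingHom ℝ)).eval x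
  rw [hermitePoly, iteratedDeriv_eq_iterate, Polynomial.eval_map, ← algebraMap_int_eq,
    ← Polynomial.aeval_def, Polynomial.hermite_eq_deriv_gaussian']
  ring

variable {d : ℕ}

theorem prod_exp_neg_sq_div_four (x : EuclideanSpace ℝ (Fin d)) :
    ∏ i, Real.exp (-(x i ^ 2 / 4)) = Real.exp (-(1 / 4 * ‖x‖ ^ 2)) := by
  rw [← Real.exp_sum, Finset.sum_neg_distrib, ← Finset.sum_div, EuclideanSpace.real_norm_sq_eq,
    one_div_mul_eq_div]

theorem hermiteFunMulti_eq (β : Fin d → ℕ) (x : EuclideanSpace ℝ (Fin d)) :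
    hermiteFunMulti d β x = (∏ i, (√(√(2 * Real.pi) * (β i).factorial))⁻¹) *
      (MvPolynomial.eval x (∏ i, (hermiteSeq (β i)).toMvPolynomial i) *
        Real.exp (-(1 / 4 * ‖x‖ ^ 2))) := by
  simp only [hermiteFunMulti, hermiteFun, hermitePoly_eq_eval_hermiteSeq, Finset.prod_mul_distrib,
    prod_exp_neg_sq_div_four, map_prod, MvPolynomial.eval_toMvPolynomial]
  ring

theorem dense_span_range_of_eq_hermiteFunMulti
    {h : (Fin d → ℕ) → 𝓢(EuclideanSpace ℝ (Fin d), ℝ)}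
    (hh : ∀ β x, h β x = hermiteFunMulti d β x) :
    Dense (Submodule.span ℝ (Set.range h) : Set 𝓢(EuclideanSpace ℝ (Fin d), ℝ)) := by
  have hb : (0 : ℝ) < 1 / 4 := by norm_num
  let γ := gaussianSchwartzMap (EuclideanSpace ℝ (Fin d)) hb
  refine (dense_span_range_mvPolynomialSMul_prod (γ := γ) (superexpDecay_exp_neg_mul_norm_sq hb)
    (fun _ ↦ Real.exp_ne_zero _) hermiteSeq).mono (Submodule.span_le.2 ?_)
  rintro _ ⟨β, rfl⟩
  let c : ℝ := ∏ i, (√(√(2 * Real.pi) * (β i).factorial))⁻¹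
  have hc : c ≠ 0 := Finset.prod_ne_zero_iff.2 fun i _ ↦ by positivity
  have hβ : h β = c • mvPolynomialSMul γ (∏ i, (hermiteSeq (β i)).toMvPolynomial i) := by
    ext x
    rw [hh, hermiteFunMulti_eq, smul_apply, mvPolynomialSMul_apply, gaussianSchwartzMap_apply,
      smul_eq_mul]
  rw [SetLike.mem_coe, ← Submodule.smul_mem_iff _ hc, ← hβ]
  exact Submodule.subset_span ⟨β, rfl⟩

end Hermite

theorem tempered_distribution_ext_of_hermite_coeffs_general {d : ℕ} {G : Type*}
    [AddCommMonoid G] [Module ℝ G] [TopologicalSpace G] [T2Space G]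
    {h : (Fin d → ℕ) → 𝓢(EuclideanSpace ℝ (Fin d), ℝ)}
    (hh : ∀ β x, h β x = hermiteFunMulti d β x)
    {T S : 𝓢(EuclideanSpace ℝ (Fin d), ℝ) →L[ℝ] G} (hTS : ∀ β, T (h β) = S (h β)) :
    T = S :=
  ContinuousLinearMap.ext_on (dense_span_range_of_eq_hermiteFunMulti hh) <|
    Set.forall_mem_range.2 hTS

/-- Two tempered distributions with the same Hermite coefficients are equal. -/
theorem tempered_distribution_ext_of_hermite_coeffs (d : ℕ)
    (h : (Fin d → ℕ) → SchwartzMap (EuclideanSpace ℝ (Fin d)) ℝ)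
    (hh : ∀ β x, h β x = hermiteFunMulti d β x)
    (T S : SchwartzMap (EuclideanSpace ℝ (Fin d)) ℝ →L[ℝ] ℝ)
    (hTS : ∀ β : Fin d → ℕ, T (h β) = S (h β)) :
    T = S :=
  tempered_distribution_ext_of_hermite_coeffs_general hh hTS
end
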